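/- Let θ > 0 and, for each N ≥ 1, let α = α(N) > 0 be real and M = M(N) ≥ N an integer, with α(N)/N → α̂ ≥ 0 and M(N)/N → M̂ as N → ∞. Let y = y(N) be distributed as the β-Jacobi ensemble P_θ^{α,M,N}. Then for all positive integers k_1, k_2, lim_{N→∞} Cov( 𝔓_{k_1}(y), 𝔓_{k_2}(y) ) = θ^{−1} (2πi)^{−2} ∮∮ (v_2 − v_1)^{−2} ∏_{i=1}^2 ( (v_i/(v_i+1)) · ((v_i − α̂)/(v_i − α̂ − M̂)) )^{k_i} dv_1 dv_2, where the v_1- and v_2-contours are positively oriented circles centered at −1 of radii r_1 < r_2 with 0 < r_1 < r_2 < 1 + α̂ + M̂. -/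

import Mathlib

open MeasureTheory

/-- The (unnormalized) β-Jacobi density `∏_{i<j}|x_i−x_j|^{2θ} ∏_i x_i^{θα−1}(1−x_i)^{θ(M−N)+θ−1}`
with `β = 2θ`. -/
noncomputable def jacobiDensity (θ α : ℝ) (M N : ℕ) (x : Fin N → ℝ) : ℝ :=
  (∏ p ∈ Finset.univ.filter (fun p : Fin N × Fin N => p.1 < p.2),
      |x p.1 - x p.2| ^ (2 * θ)) *
    ∏ i : Fin N, (x i ^ (θ * α - 1) * (1 - x i) ^ (θ * ((M : ℝ) - (N : ℝ)) + θ - 1))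

/-- The unnormalized β-Jacobi measure on `[0,1]^N`. -/
noncomputable def jacobiMeasureRaw (θ α : ℝ) (M N : ℕ) : Measure (Fin N → ℝ) :=
  (volume.restrict (Set.univ.pi fun _ : Fin N => Set.Icc (0 : ℝ) 1)).withDensity
    fun x => ENNReal.ofReal (jacobiDensity θ α M N x)

/-- The β-Jacobi ensemble `P_θ^{α,M,N}`: the normalized β-Jacobi measure on `[0,1]^N`. -/
noncomputable def jacobiEnsemble (θ α : ℝ) (M N : ℕ) : Measure (Fin N → ℝ) :=
  (jacobiMeasureRaw θ α M N Set.univ)⁻¹ • jacobiMeasureRaw θ α M N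


/-! Part: formal power series algebra -/
section JacAlg
open PowerSeries

/-- Coefficients of `((1-p-q) + p t + q / t) ^ k` when `x0 = 1-p-q`. -/
noncomputable def jA (p x0 q : ℝ) : ℕ → ℤ → ℝ
  | 0, j => if j = 0 then 1 else 0
  | k + 1, j => q * jA p x0 q k (j + 1) + x0 * jA p x0 q k j + p * jA p x0 q k (j - 1)

/-- `t f(t)` as a power series. -/
noncomputable def jg (p x0 q : ℝ) : PowerSeries ℝ := C q + C x0 * X + C p * X ^ 2

lemma jA_eq_zero (p x0 q : ℝ) (k : ℕ) : ∀ j : ℤ, (k : ℤ) < |j| → jA p x0 q k j = 0 := by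
  induction k with
  | zero => intro j hj; simp at hj; simp [jA, hj]
  | succ k ih =>
    intro j hj
    push_cast at hj
    simp only [jA]
    rw [ih (j + 1) (by rcases abs_cases j with h | h <;> rcases abs_cases (j+1) with h' | h' <;> omega),
      ih j (by omega),
      ih (j - 1) (by rcases abs_cases j with h | h <;> rcases abs_cases (j-1) with h' | h' <;> omega)]
    ring

lemma coeff_jg_pow (p x0 q : ℝ) (k : ℕ) :
    ∀ i : ℕ, coeff i (jg p x0 q ^ k) = jA p x0 q k ((i : ℤ) - k) := by
  induction k with
  | zero => intro i; simp [jA, coeff_one]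
  | succ k ih =>
    intro i
    have e : jg p x0 q ^ (k + 1) = C q * jg p x0 q ^ k + C x0 * (X * jg p x0 q ^ k)
        + C p * (X ^ 2 * jg p x0 q ^ k) := by rw [pow_succ, jg]; ring
    rw [e]
    simp only [map_add, coeff_C_mul, coeff_X_pow_mul', jA]
    have h1 : coeff i (X * jg p x0 q ^ k) = jA p x0 q k ((i : ℤ) - (k + 1 : ℕ)) := by
      rcases i with _ | i
      · rw [coeff_zero_X_mul, jA_eq_zero]
        push_cast; rw [lt_abs]; omega
      · rw [coeff_succ_X_mul, ih]; congr 1; push_cast; ring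
    rw [h1, ih]
    have h2 : (if 2 ≤ i then coeff (i - 2) (jg p x0 q ^ k) else 0)
        = jA p x0 q k ((i : ℤ) - (k + 1 : ℕ) - 1) := by
      split_ifs with h
      · rw [ih]; congr 1; omega
      · rw [jA_eq_zero]; push_cast; rw [lt_abs]; omega
    rw [h2]
    congr 3
    congr 1
    push_cast; ring

lemma jA_symm (p x0 q : ℝ) (hp : p ≠ 0) (hq : q ≠ 0) (k : ℕ) :
    ∀ j : ℤ, jA p x0 q k (-j) = jA p x0 q k j * (q / p) ^ j := by
  induction k with
  | zero =>
    intro j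
    by_cases h : j = 0 <;> simp [jA, h]
  | succ k ih =>
    intro j
    have hr : q / p ≠ 0 := div_ne_zero hq hp
    simp only [jA]
    rw [show -j + 1 = -(j - 1) by ring, show -j - 1 = -(j + 1) by ring, ih, ih, ih,
      zpow_sub_one₀ hr, zpow_add_one₀ hr]
    field_simp
    ring

/-- The limiting covariance (times `θ`). -/
noncomputable def jG (p x0 q : ℝ) (k l : ℕ) : ℝ :=
  ∑ i ∈ Finset.range (k + 1), (i : ℝ) * jA p x0 q l i * jA p x0 q k (-(i : ℤ))

noncomputable def jD (p x0 q : ℝ) (l : ℕ) : PowerSeries ℝ := mk fun j => (j : ℝ) * jA p x0 q l j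

lemma coeff_jD_mul (p x0 q : ℝ) (k l : ℕ) :
    coeff k (jD p x0 q l * jg p x0 q ^ k) = jG p x0 q k l := by
  rw [coeff_mul, Finset.Nat.sum_antidiagonal_eq_sum_range_succ_mk, jG]
  refine Finset.sum_congr rfl fun i hi => ?_
  have : i ≤ k := by simpa [Nat.lt_succ_iff] using hi
  simp only [jD, coeff_mk, coeff_jg_pow]
  congr 2
  omega

lemma coeff_X_mul_deriv (y : PowerSeries ℝ) (n : ℕ) :
    coeff n (X * d⁄dX ℝ y) = n * coeff n y := by
  rcases n with _ | n
  · simp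
  · rw [coeff_succ_X_mul, coeff_derivative]; push_cast; ring

noncomputable def jdf (p q : ℝ) : PowerSeries ℝ := C p * X ^ 2 - C q

lemma jdf_eq (p x0 q : ℝ) : X * d⁄dX ℝ (jg p x0 q) = jg p x0 q + jdf p q := by
  ext n
  rw [coeff_X_mul_deriv]
  simp only [jg, jdf, map_add, map_sub, coeff_C_mul, coeff_C, coeff_X, coeff_X_pow]
  rcases n with _ | _ | _ | n
  · simp
  · simp
  · simp; ring
  · simp

lemma coeff_pow_jdf (p x0 q : ℝ) (k i : ℕ) :
    ((k : ℝ) + 1) * coeff i (jg p x0 q ^ k * jdf p q)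
      = ((i : ℝ) - (k + 1)) * coeff i (jg p x0 q ^ (k + 1)) := by
  have h := coeff_X_mul_deriv (jg p x0 q ^ (k + 1)) i
  rw [Derivation.leibniz_pow] at h
  have e : X * ((k + 1) • jg p x0 q ^ (k + 1 - 1) • d⁄dX ℝ (jg p x0 q))
      = C ((k : ℝ) + 1) * (jg p x0 q ^ (k + 1) + jg p x0 q ^ k * jdf p q) := by
    have := jdf_eq p x0 q
    simp only [nsmul_eq_mul, smul_eq_mul, Nat.add_sub_cancel]
    have hc : ((k + 1 : ℕ) : PowerSeries ℝ) = C ((k : ℝ) + 1) := by simp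
    rw [hc]
    linear_combination C ((k : ℝ) + 1) * jg p x0 q ^ k * this
  rw [e, coeff_C_mul, map_add] at h
  linarith

lemma coeff_pow_jdf_zero (p x0 q : ℝ) (k : ℕ) : coeff (k + 1) (jg p x0 q ^ k * jdf p q) = 0 := by
  have h := coeff_pow_jdf p x0 q k (k + 1)
  push_cast at h
  rw [sub_self, zero_mul] at h
  exact (mul_eq_zero.mp h).resolve_left (by positivity)

/-- The symmetry step. -/
lemma jD_symm (p x0 q : ℝ) (hp : p ≠ 0) (hq : q ≠ 0) (n l : ℕ) :
    2 * coeff (n + 1) (jD p x0 q (l + 1) * (jg p x0 q ^ n * jdf p q))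
      = (l + 1) * coeff (n + 1 + (l + 1)) ((jg p x0 q ^ l * jdf p q) * (jg p x0 q ^ n * jdf p q)) := by
  set φ : ℤ → ℝ := fun j => (j : ℝ) ^ 2 * jA p x0 q (l + 1) j * jA p x0 q (n + 1) (-j) with hφ
  have hn0 : (n : ℝ) + 1 ≠ 0 := by positivity
  have hsym : ∀ j, φ (-j) = φ j := by
    intro j
    simp only [hφ]
    have h1 := jA_symm p x0 q hp hq (l + 1) j
    have h2 := jA_symm p x0 q hp hq (n + 1) j
    rw [neg_neg, h1, h2]
    push_cast; ring
  have h0 : φ 0 = 0 := by simp [hφ]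
  have hv1 : ∀ j : ℤ, ((l + 1 : ℕ) : ℤ) < |j| → φ j = 0 := by
    intro j hj; simp [hφ, jA_eq_zero p x0 q (l + 1) j hj]
  have hv2 : ∀ j : ℤ, ((n + 1 : ℕ) : ℤ) < |j| → φ j = 0 := by
    intro j hj; simp [hφ, jA_eq_zero p x0 q (n + 1) (-j) (by rwa [abs_neg])]
  have hL : (n + 1) * coeff (n + 1) (jD p x0 q (l + 1) * (jg p x0 q ^ n * jdf p q))
      = - ∑ i ∈ Finset.range (n + 1 + 1), φ i := by
    rw [coeff_mul, Finset.Nat.sum_antidiagonal_eq_sum_range_succ_mk, Finset.mul_sum,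
      ← Finset.sum_neg_distrib]
    refine Finset.sum_congr rfl fun i hi => ?_
    have hi' : i ≤ n + 1 := by simpa [Nat.lt_succ_iff] using hi
    have h := coeff_pow_jdf p x0 q n (n + 1 - i)
    rw [coeff_jg_pow, Nat.cast_sub hi', Nat.cast_sub hi'] at h
    simp only [jD, coeff_mk, hφ]
    have e : (((n + 1 : ℕ) : ℤ) - (i : ℤ) - ((n + 1 : ℕ) : ℤ)) = -(i : ℤ) := by ring
    rw [e] at h
    push_cast at h ⊢
    linear_combination (i : ℝ) * jA p x0 q (l + 1) i * h
  have hR : (n + 1) * ((l + 1) *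
      coeff (n + 1 + (l + 1)) ((jg p x0 q ^ l * jdf p q) * (jg p x0 q ^ n * jdf p q)))
      = - ∑ i ∈ Finset.range ((l + 1) + (n + 1 + 1)), φ ((i : ℤ) - (l + 1 : ℕ)) := by
    rw [coeff_mul, Finset.Nat.sum_antidiagonal_eq_sum_range_succ_mk, Finset.mul_sum, Finset.mul_sum,
      ← Finset.sum_neg_distrib]
    refine Finset.sum_congr (by congr 1; omega) fun i hi => ?_
    have hi' : i ≤ n + 1 + (l + 1) := by rw [Finset.mem_range] at hi; omega
    have h := coeff_pow_jdf p x0 q n (n + 1 + (l + 1) - i)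
    have h' := coeff_pow_jdf p x0 q l i
    rw [coeff_jg_pow, Nat.cast_sub hi', Nat.cast_sub hi'] at h
    rw [coeff_jg_pow] at h'
    simp only [hφ]
    have e : (((n + 1 + (l + 1) : ℕ) : ℤ) - (i : ℤ) - ((n + 1 : ℕ) : ℤ))
      = -((i : ℤ) - ((l + 1 : ℕ) : ℤ)) := by push_cast; ring
    rw [e] at h
    push_cast at h h' ⊢
    linear_combination ((l + 1 : ℝ) * coeff i (jg p x0 q ^ l * jdf p q)) * h
      + (((n : ℝ) + 1 + (l + 1) - i - (n + 1)) * jA p x0 q (n + 1) (-((i : ℤ) - (l + 1)))) * h'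
  have hS : ∑ i ∈ Finset.range ((l + 1) + (n + 1 + 1)), φ ((i : ℤ) - (l + 1 : ℕ))
      = 2 * ∑ i ∈ Finset.range (n + 1 + 1), φ i := by
    rw [Finset.sum_range_add, two_mul]
    congr 1
    · rw [← Finset.sum_range_reflect]
      have : ∀ N : ℕ, (∀ j : ℤ, (N : ℤ) < |j| → φ j = 0) → ∀ K, N ≤ K →
          ∑ i ∈ Finset.range (K + 1), φ i = ∑ i ∈ Finset.range (N + 1), φ i := by
        intro N hN K hK
        symm
        apply Finset.sum_subset
        · intro x; simp; omega
        · intro x _ hx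
          apply hN
          simp at hx ⊢; omega
      have e : ∑ i ∈ Finset.range (n + 1 + 1), φ i = ∑ i ∈ Finset.range (l + 1 + 1), φ i := by
        rcases le_total n l with h | h
        · exact (this (n + 1) hv2 (l + 1) (by omega)).symm
        · exact (this (l + 1) hv1 (n + 1) (by omega))
      rw [e, Finset.sum_range_succ' (fun i : ℕ => φ i) (l + 1)]
      rw [Nat.cast_zero, h0, add_zero]
      refine Finset.sum_congr rfl fun i hi => ?_
      rw [← hsym]
      congr 1
      have : i < l + 1 := by simpa using hi
      omega
    · refine Finset.sum_congr rfl fun i hi => ?_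
      congr 1; push_cast; ring
  have := hR.trans (by rw [hS])
  have h2 : (n + 1 : ℝ) * (2 * coeff (n + 1) (jD p x0 q (l + 1) * (jg p x0 q ^ n * jdf p q))
      - (l + 1) * coeff (n + 1 + (l + 1)) ((jg p x0 q ^ l * jdf p q) * (jg p x0 q ^ n * jdf p q))) = 0 := by
    linear_combination 2 * hL - this
  exact sub_eq_zero.mp ((mul_eq_zero.mp h2).resolve_left hn0)

theorem jG_recursion (a M K p x0 q : ℝ) (ha : 0 ≤ a) (hM : 1 ≤ M) (hK : K = 1 + a + M)
    (hq : q = (1 + a) / K ^ 2) (hp : p = (a + M) * M / K ^ 2) (hx : x0 = 1 - p - q)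
    (μ : ℕ → ℝ) (hμ0 : μ 0 = 1)
    (hμ : ∀ n, ∑ ab ∈ Finset.HasAntidiagonal.antidiagonal n, μ ab.1 * μ ab.2
      - ∑ ab ∈ Finset.HasAntidiagonal.antidiagonal (n + 1), μ ab.1 * μ ab.2
      + a * (μ n - μ (n + 1)) - (M - 1) * μ (n + 1) = 0) (n l : ℕ) :
    2 * ∑ ab ∈ Finset.HasAntidiagonal.antidiagonal n, μ ab.1 * jG p x0 q ab.2 (l + 1)
      - 2 * ∑ ab ∈ Finset.HasAntidiagonal.antidiagonal (n + 1), μ ab.1 * jG p x0 q ab.2 (l + 1)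
      + a * (jG p x0 q n (l + 1) - jG p x0 q (n + 1) (l + 1)) - (M - 1) * jG p x0 q (n + 1) (l + 1)
      + ((l + 1 : ℕ) : ℝ) * (μ (n + (l + 1)) - μ (n + (l + 1) + 1)) = 0 := by
  have hKpos : 0 < K := by rw [hK]; positivity
  have hqpos : 0 < q := by rw [hq]; positivity
  have hppos : 0 < p := by rw [hp]; positivity
  have E1 : q * K ^ 2 = 1 + a := by rw [hq]; field_simp
  have E2 : p * K ^ 2 = (a + M) * M := by rw [hp]; field_simp
  set g := jg p x0 q with hg
  have hg0 : constantCoeff g = q := by simp [hg, jg]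
  set gi := g⁻¹ with hgi
  have hggi : g * gi = 1 := PowerSeries.mul_inv_cancel _ (by rw [hg0]; exact hqpos.ne')
  set ζ : PowerSeries ℝ := X * gi with hζ
  have hζ0 : constantCoeff ζ = 0 := by simp [hζ]
  set y : PowerSeries ℝ := mk 1 with hy
  have hy1 : y * (1 - X) = 1 := mk_one_mul_one_sub_eq_one ℝ
  set u : PowerSeries ℝ := 1 + C K * X * y with hu
  have cK : (C K : PowerSeries ℝ) = 1 + C a + C M := by rw [hK]; simp
  have cx : (C x0 : PowerSeries ℝ) = 1 - C p - C q := by rw [hx]; simp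
  have cE1 : (C q : PowerSeries ℝ) * C K ^ 2 = 1 + C a := by
    rw [← map_pow, ← map_mul, E1]; simp
  have cE2 : (C p : PowerSeries ℝ) * C K ^ 2 = (C a + C M) * C M := by
    rw [← map_pow, ← map_mul, E2]; simp
  have E3 : K * (p - q) = M - 1 := by
    have : K * (K * (p - q) - (M - 1)) = 0 := by
      rw [hK] at E1 E2 ⊢
      linear_combination E2 - E1
    linarith [(mul_eq_zero.mp this).resolve_left hKpos.ne']
  have cE3 : (C K : PowerSeries ℝ) * (C p - C q) = C M - 1 := by
    rw [← map_sub, ← map_mul, E3]; simp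
  have hXg : X - g = - ((1 - X) * (C q - C p * X)) := by
    rw [hg, jg, cx]; ring
  have huX : u * (1 - X) = 1 + (C K - 1) * X := by
    rw [hu]; linear_combination C K * X * hy1
  -- key bracket
  have hbr : 2 * u * (X - g) + C a * X - (C a + C M - 1) * g = C K * jdf p q := by
    have : u * (X - g) = - (1 + (C K - 1) * X) * (C q - C p * X) := by
      rw [hXg, ← huX]; ring
    rw [mul_assoc, this, hg, jg, jdf, cx, cK]
    rw [cK] at cE3
    linear_combination X * cE3
  -- quadratic equation for u
  have hquad : (X - g) * u ^ 2 + (C a * X - (C a + C M - 1) * g) * u + (C a + C M) * g = 0 := by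
    have h1 : u * (X - g) = - (1 + (C K - 1) * X) * (C q - C p * X) := by
      rw [hXg, ← huX]; ring
    have h2 : ((X - g) * u ^ 2 + (C a * X - (C a + C M - 1) * g) * u + (C a + C M) * g) * (1 - X) = 0 := by
      have h3 : ((X - g) * u ^ 2 + (C a * X - (C a + C M - 1) * g) * u + (C a + C M) * g) * (1 - X)
        = (u * (X - g) + (C a * X - (C a + C M - 1) * g)) * (u * (1 - X))
          + (C a + C M) * g * (1 - X) := by ring
      rw [h3, huX, h1, hg, jg, cx, cK]
      rw [cK] at cE1 cE2
      linear_combination - X * cE1 + X ^ 2 * cE2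
    calc _ = ((X - g) * u ^ 2 + (C a * X - (C a + C M - 1) * g) * u + (C a + C M) * g) * (1 - X) * y := by
            rw [mul_assoc, mul_comm (1 - X) y, hy1, mul_one]
      _ = 0 := by rw [h2, zero_mul]
  -- substitution
  have hs : HasSubst ζ := HasSubst.of_constantCoeff_zero' hζ0
  set V : PowerSeries ℝ := mk μ with hV
  have hVeq : (X - 1) * V ^ 2 + (C a * X - (C a + C M - 1)) * V + (C a + C M) = 0 := by
    ext j
    have e : (X - 1) * V ^ 2 + (C a * X - (C a + C M - 1)) * V + (C a + C M)
      = X * (V * V) - V * V + C a * (X * V) - C (a + M - 1) * V + C (a + M) := by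
      simp only [map_add, map_sub, map_one]; ring
    rw [e]
    rcases j with _ | j
    · simp [hV, hμ0]; ring
    · have := hμ j
      have hVV : ∀ i, coeff i (V * V) = ∑ ab ∈ Finset.HasAntidiagonal.antidiagonal i, μ ab.1 * μ ab.2 := by
        intro i; simp [coeff_mul, hV]
      have hVc : ∀ i, coeff i V = μ i := by intro i; simp [hV]
      rw [map_add, map_sub, map_add, map_sub, coeff_succ_X_mul, coeff_C_mul, coeff_C_mul,
        coeff_succ_X_mul, hVV, hVV, hVc, hVc, coeff_C, if_neg (Nat.succ_ne_zero j), map_zero]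
      linear_combination this
  have hsC : ∀ r : ℝ, (substAlgHom hs) (C r : PowerSeries ℝ) = (C r : PowerSeries ℝ) := fun r =>
    (substAlgHom hs).commutes r
  have hsX : (substAlgHom hs) (X : PowerSeries ℝ) = ζ := substAlgHom_X hs
  set W : PowerSeries ℝ := (substAlgHom hs) V with hW
  have hWeq : (ζ - 1) * W ^ 2 + (C a * ζ - (C a + C M - 1)) * W + (C a + C M) = 0 := by
    have := congrArg (substAlgHom hs) hVeq
    simpa only [map_add, map_sub, map_mul, map_pow, map_one, map_zero, hsC, hsX] using this
  have hVdec : ∀ n, V = ∑ i ∈ Finset.range n, C (μ i) * X ^ i + X ^ n * mk (fun i => μ (i + n)) := by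
    intro n
    induction n with
    | zero => simp [hV]
    | succ n ih =>
      have e : (mk (fun i => μ (i + n)) : PowerSeries ℝ) = C (μ n) + X * mk (fun i => μ (i + (n + 1))) := by
        ext j
        rcases j with _ | j
        · simp
        · rw [map_add, coeff_succ_X_mul, coeff_mk, coeff_mk, coeff_C, if_neg (Nat.succ_ne_zero j), zero_add]
          congr 1; ring
      rw [Finset.sum_range_succ]
      conv_lhs => rw [ih, e]
      ring
  have hWdec : ∀ n, ∃ R : PowerSeries ℝ, W = ∑ i ∈ Finset.range n, C (μ i) * ζ ^ i + ζ ^ n * R := by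
    intro n
    refine ⟨substAlgHom hs (mk (fun i => μ (i + n))), ?_⟩
    have := congrArg (substAlgHom hs) (hVdec n)
    simpa only [map_add, map_sub, map_mul, map_pow, map_one, map_zero, hsC, hsX, map_sum] using this
  have hWu : W = u := by
    obtain ⟨R, hR⟩ := hWdec 1
    have hW0 : constantCoeff W = 1 := by rw [hR]; simp [hμ0, hζ0]
    have hu0 : constantCoeff u = 1 := by simp [hu]
    have h1 : (W - u) * ((ζ - 1) * (W + u) + (C a * ζ - (C a + C M - 1))) = 0 := by
      linear_combination hWeq - gi * hquad + (-(u ^ 2) - (C a + C M - 1) * u + (C a + C M)) * hggi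
    rcases mul_eq_zero.mp h1 with h | h
    · exact sub_eq_zero.mp h
    · exfalso
      have := congrArg constantCoeff h
      simp [hW0, hu0, hζ0] at this
      linarith
  have hudec : ∀ n, ∃ R : PowerSeries ℝ, u = ∑ i ∈ Finset.range n, C (μ i) * ζ ^ i + ζ ^ n * R := by
    rw [← hWu]; exact hWdec
  have hgζ : ∀ i k, g ^ (i + k) * ζ ^ i = X ^ i * g ^ k := by
    intro i k
    have : (g * ζ) ^ i = X ^ i := by congr 1; rw [hζ]; linear_combination X * hggi
    rw [pow_add, ← this]; ring
  -- convolution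
  have hconv : ∀ (D : PowerSeries ℝ) (m : ℕ),
      ∑ ab ∈ Finset.HasAntidiagonal.antidiagonal m, μ ab.1 * coeff ab.2 (D * g ^ ab.2) = coeff m (D * g ^ m * u) := by
    intro D m
    obtain ⟨R, hR⟩ := hudec (m + 1)
    rw [hR, mul_add, map_add, Finset.mul_sum, map_sum]
    have : D * g ^ m * (ζ ^ (m + 1) * R) = X ^ (m + 1) * (D * g ^ m * gi ^ (m + 1) * R) := by
      rw [hζ]; ring
    rw [this, coeff_X_pow_mul', if_neg (by omega), add_zero,
      Finset.Nat.sum_antidiagonal_eq_sum_range_succ_mk]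
    refine Finset.sum_congr rfl fun i hi => ?_
    have hi' : i ≤ m := by simpa [Nat.lt_succ_iff] using hi
    obtain ⟨k, rfl⟩ := Nat.exists_eq_add_of_le hi'
    have e : D * g ^ (i + k) * (C (μ i) * ζ ^ i) = C (μ i) * (X ^ i * (D * g ^ k)) := by
      linear_combination D * C (μ i) * hgζ i k
    rw [e, coeff_C_mul, coeff_X_pow_mul', if_pos hi']
    simp
  -- Lagrange inversion
  have hdζ : X * d⁄dX ℝ ζ = - (ζ * gi * jdf p q) := by
    have h1 : d⁄dX ℝ ζ = gi + X * d⁄dX ℝ gi := by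
      rw [hζ, Derivation.leibniz, derivative_X, smul_eq_mul, smul_eq_mul]; ring
    have h2 : g * d⁄dX ℝ gi + gi * d⁄dX ℝ g = 0 := by
      have := congrArg (d⁄dX ℝ) hggi
      rwa [Derivation.leibniz, smul_eq_mul, smul_eq_mul, Derivation.map_one_eq_zero] at this
    have h3 := jdf_eq p x0 q
    rw [← hg] at h3
    rw [h1, hζ]
    linear_combination X ^ 2 * gi * h2 - (X * gi ^ 2) * h3 - (X ^ 2 * d⁄dX ℝ gi + X * gi) * hggi
  have hdζp : ∀ i : ℕ, X * d⁄dX ℝ (ζ ^ i) = - (C (i : ℝ) * (ζ ^ i * gi * jdf p q)) := by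
    intro i
    rcases i with _ | i
    · simp
    · rw [Derivation.leibniz_pow, smul_eq_mul, nsmul_eq_mul, Nat.add_sub_cancel, pow_succ]
      have hc : ((i + 1 : ℕ) : PowerSeries ℝ) = C (((i + 1 : ℕ)) : ℝ) := by simp
      rw [hc]
      linear_combination C (((i + 1 : ℕ)) : ℝ) * ζ ^ i * hdζ
  have hlag : ∀ n : ℕ, (n + 1) * μ (n + 1) = coeff (n + 1) (g ^ (n + 1) * (X * d⁄dX ℝ u)) := by
    intro n
    obtain ⟨R, hR⟩ := hudec (n + 2)
    have e1 : X * d⁄dX ℝ u = ∑ i ∈ Finset.range (n + 2), - (C (μ i * i) * (ζ ^ i * gi * jdf p q))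
        + X ^ (n + 2) * (gi ^ (n + 2) * (X * d⁄dX ℝ R - C ((n + 2 : ℕ) : ℝ) * gi * jdf p q * R)) := by
      conv_lhs => rw [hR]
      rw [map_add, map_sum, mul_add, Finset.mul_sum]
      congr 1
      · refine Finset.sum_congr rfl fun i _ => ?_
        rw [Derivation.leibniz, derivative_C, smul_zero, add_zero, smul_eq_mul, map_mul]
        linear_combination C (μ i) * hdζp i
      · rw [Derivation.leibniz, smul_eq_mul, smul_eq_mul]
        have e : X ^ (n + 2) * gi ^ (n + 2) = ζ ^ (n + 2) := by rw [hζ]; ring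
        linear_combination R * hdζp (n + 2) - (X * d⁄dX ℝ R - C ((n + 2 : ℕ) : ℝ) * gi * jdf p q * R) * e
    have e2 : g ^ (n + 1) * (X * d⁄dX ℝ u)
        = ∑ i ∈ Finset.range (n + 1), - (C (μ i * i) * (X ^ i * (g ^ (n - i) * jdf p q)))
          - C (μ (n + 1) * ((n + 1 : ℕ) : ℝ)) * (X ^ (n + 1) * (gi * jdf p q))
        + X ^ (n + 2) * (g ^ (n + 1) * (gi ^ (n + 2) * (X * d⁄dX ℝ R - C ((n + 2 : ℕ) : ℝ) * gi * jdf p q * R))) := by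
      rw [e1, mul_add, Finset.mul_sum, Finset.sum_range_succ]
      congr 1
      · rw [sub_eq_add_neg]
        congr 1
        · refine Finset.sum_congr rfl fun i hi => ?_
          have hi' : i ≤ n := by simpa [Nat.lt_succ_iff] using hi
          obtain ⟨k, rfl⟩ := Nat.exists_eq_add_of_le hi'
          rw [Nat.add_sub_cancel_left]
          have := hgζ i (k + 1)
          rw [show i + (k + 1) = i + k + 1 by ring] at this
          linear_combination -(C (μ i * i) * gi * jdf p q) * this - C (μ i * i) * X ^ i * g ^ k * jdf p q * hggi
        · have := hgζ (n + 1) 0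
          rw [add_zero, pow_zero, mul_one] at this
          linear_combination -(C (μ (n + 1) * ((n + 1 : ℕ) : ℝ)) * gi * jdf p q) * this
      · ring
    rw [e2, map_add, map_sub, map_sum, coeff_X_pow_mul', if_neg (by omega), add_zero, coeff_C_mul,
      coeff_X_pow_mul', if_pos le_rfl, Finset.sum_eq_zero, Nat.sub_self]
    · have h0 : coeff 0 (gi * jdf p q) = -1 := by
        have h := congrArg constantCoeff hggi
        rw [map_mul, hg0, map_one] at h
        rw [coeff_zero_eq_constantCoeff_apply, map_mul]
        have : constantCoeff (jdf p q) = -q := by simp [jdf]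
        rw [this]; linarith
      rw [h0]; push_cast; ring
    · intro i hi
      have hi' : i ≤ n := by simpa [Nat.lt_succ_iff] using hi
      obtain ⟨k, rfl⟩ := Nat.exists_eq_add_of_le hi'
      rw [map_neg, coeff_C_mul, coeff_X_pow_mul', if_pos (by omega), Nat.add_sub_cancel_left,
        show i + k + 1 - i = k + 1 by omega, hg, coeff_pow_jdf_zero]
      simp
  have hμn : ∀ n : ℕ, μ (n + 1) = - coeff (n + 1) (u * (g ^ n * jdf p q)) := by
    intro n
    have h1 := hlag n
    have h2 := coeff_X_mul_deriv (g ^ (n + 1) * u) (n + 1)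
    have h3 := jdf_eq p x0 q
    rw [← hg] at h3
    have e : X * d⁄dX ℝ (g ^ (n + 1) * u) = g ^ (n + 1) * (X * d⁄dX ℝ u)
        + C ((n + 1 : ℕ) : ℝ) * (g ^ (n + 1) * u) + C ((n + 1 : ℕ) : ℝ) * (u * (g ^ n * jdf p q)) := by
      rw [Derivation.leibniz, Derivation.leibniz_pow, smul_eq_mul, smul_eq_mul, nsmul_eq_mul,
        Nat.add_sub_cancel, smul_eq_mul]
      have hc : ((n + 1 : ℕ) : PowerSeries ℝ) = C (((n + 1 : ℕ)) : ℝ) := by simp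
      rw [hc]
      linear_combination C (((n + 1 : ℕ)) : ℝ) * u * g ^ n * h3
    rw [e, map_add, map_add, coeff_C_mul, coeff_C_mul, ← h1] at h2
    push_cast at h2
    have h4 : ((n : ℝ) + 1) * (μ (n + 1) + coeff (n + 1) (u * (g ^ n * jdf p q))) = 0 := by
      linear_combination h2
    have := (mul_eq_zero.mp h4).resolve_left (by positivity)
    linarith
  have hdiff : ∀ n : ℕ, μ (n + 2) - μ (n + 1) = K / 2 * coeff (n + 2) (g ^ n * jdf p q * jdf p q) := by
    intro n
    have h1 := hμn (n + 1)
    have h2 := hμn n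
    have h3 := coeff_pow_jdf_zero p x0 q n
    have h4 := coeff_pow_jdf_zero p x0 q (n + 1)
    rw [← coeff_succ_X_mul] at h2 h3
    rw [← hg] at h3 h4
    have e : C (2 : ℝ) * (-(u * (g ^ (n + 1) * jdf p q)) + X * (u * (g ^ n * jdf p q)))
        = C K * (g ^ n * jdf p q * jdf p q) - C a * (X * (g ^ n * jdf p q))
         + C (a + M - 1) * (g ^ (n + 1) * jdf p q) := by
      simp only [map_add, map_sub, map_one]
      have : (C (2 : ℝ) : PowerSeries ℝ) = 2 := map_ofNat C 2
      rw [this]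
      linear_combination g ^ n * jdf p q * hbr
    have e2 := congrArg (coeff (n + 2)) e
    rw [coeff_C_mul, map_add, map_neg, map_add, map_sub, coeff_C_mul, coeff_C_mul, coeff_C_mul, h3, h4] at e2
    rw [h1, h2]
    linear_combination e2 / 2
  simp only [← coeff_jD_mul]
  rw [← hg, hconv, hconv]
  have hsy := jD_symm p x0 q hppos.ne' hqpos.ne' n l
  have hd := hdiff (n + l)
  rw [← hg] at hsy
  have e3 : (g ^ l * jdf p q) * (g ^ n * jdf p q) = g ^ (n + l) * jdf p q * jdf p q := by ring
  rw [e3, show n + 1 + (l + 1) = n + l + 2 by ring] at hsy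
  rw [show n + (l + 1) + 1 = n + l + 2 by ring, show n + (l + 1) = n + l + 1 by ring]
  have e : C (2 : ℝ) * (X * (jD p x0 q (l + 1) * g ^ n * u)) - C (2 : ℝ) * (jD p x0 q (l + 1) * g ^ (n + 1) * u)
      + C a * (X * (jD p x0 q (l + 1) * g ^ n)) - C (a + M - 1) * (jD p x0 q (l + 1) * g ^ (n + 1))
      = C K * (jD p x0 q (l + 1) * (g ^ n * jdf p q)) := by
    simp only [map_add, map_sub, map_one]
    have : (C (2 : ℝ) : PowerSeries ℝ) = 2 := map_ofNat C 2
    rw [this]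
    linear_combination jD p x0 q (l + 1) * g ^ n * hbr
  have e2 := congrArg (coeff (n + 1)) e
  rw [map_sub, map_add, map_sub, coeff_C_mul, coeff_C_mul, coeff_C_mul, coeff_C_mul, coeff_C_mul,
    coeff_succ_X_mul, coeff_succ_X_mul] at e2
  push_cast
  linear_combination e2 + K / 2 * hsy - (l + 1) * hd
end JacAlg
/-! Part: contour integrals -/
section JacContour
open Complex

lemma jac_pow_expand (p x0 q : ℝ) (k : ℕ) (t : ℂ) (ht : t ≠ 0) :
    ((x0 : ℂ) + p * t + q * t⁻¹) ^ k
      = ∑ i ∈ Finset.range (2 * k + 1), (jA p x0 q k ((i : ℤ) - k) : ℂ) * t ^ ((i : ℤ) - k) := by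
  set P : Polynomial ℝ := Polynomial.C q + Polynomial.C x0 * Polynomial.X
    + Polynomial.C p * Polynomial.X ^ 2 with hP
  have hcoe : (P : PowerSeries ℝ) = jg p x0 q := by simp [hP, jg]
  have hc : ∀ i, (P ^ k).coeff i = jA p x0 q k ((i : ℤ) - k) := by
    intro i
    rw [← coeff_jg_pow, ← hcoe, ← Polynomial.coe_pow, Polynomial.coeff_coe]
  have hdeg : (P ^ k).natDegree < 2 * k + 1 := by
    have h1 : P.natDegree ≤ 2 := by rw [hP]; compute_degree
    have := Polynomial.natDegree_pow_le_of_le k h1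
    omega
  have h := Polynomial.aeval_eq_sum_range' (S := ℂ) hdeg t
  have hev : Polynomial.aeval t P = t * ((x0 : ℂ) + p * t + q * t⁻¹) := by
    simp [hP]; field_simp; ring
  rw [map_pow, hev, mul_pow] at h
  have htk : t ^ k ≠ 0 := pow_ne_zero _ ht
  apply mul_left_cancel₀ htk
  rw [h, Finset.mul_sum]
  refine Finset.sum_congr rfl fun i _ => ?_
  rw [hc, zpow_sub₀ ht, zpow_natCast, zpow_natCast, Complex.real_smul]
  field_simp

noncomputable def jtK (K : ℝ) (v : ℂ) : ℂ := (v + 1) / (v + 1 - K)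
noncomputable def jtK' (K : ℝ) (v : ℂ) : ℂ := -K / (v + 1 - K) ^ 2

lemma sphere_ne {K r : ℝ} (hr : 0 < r) (hrK : r < K) {v : ℂ} (hv : v ∈ Metric.sphere (-1 : ℂ) r) :
    v + 1 ≠ 0 ∧ v + 1 - K ≠ 0 := by
  have h : ‖v + 1‖ = r := by simpa [dist_eq_norm] using hv
  constructor
  · intro h0; rw [h0, norm_zero] at h; linarith
  · intro h0
    rw [sub_eq_zero.mp h0, Complex.norm_real, Real.norm_eq_abs, abs_of_pos (hr.trans hrK)] at h
    linarith

lemma ball_ne {K r : ℝ} (hrK : r < K) {v : ℂ} (hv : v ∈ Metric.closedBall (-1 : ℂ) r) :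
    v + 1 - K ≠ 0 := by
  have h : ‖v + 1‖ ≤ r := by simpa [dist_eq_norm] using hv
  intro h0
  rw [sub_eq_zero.mp h0, Complex.norm_real, Real.norm_eq_abs] at h
  linarith [le_abs_self K]

lemma jt_ne {K r : ℝ} (hr : 0 < r) (hrK : r < K) {v : ℂ} (hv : v ∈ Metric.sphere (-1 : ℂ) r) :
    jtK K v ≠ 0 := div_ne_zero (sphere_ne hr hrK hv).1 (sphere_ne hr hrK hv).2

lemma jt_deriv {K : ℝ} {v : ℂ} (h : v + 1 - K ≠ 0) : HasDerivAt (jtK K) (jtK' K v) v := by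
  have h1 : HasDerivAt (fun v : ℂ => v + 1) 1 v := (hasDerivAt_id v).add_const 1
  have h2 : HasDerivAt (fun v : ℂ => v + 1 - K) 1 v := h1.sub_const _
  have := h1.div h2 h
  refine this.congr_deriv ?_
  rw [jtK']; congr 1; ring

lemma cauchy_zero {r : ℝ} (hr : 0 < r) {F : ℂ → ℂ}
    (h : ∀ z ∈ Metric.closedBall (-1 : ℂ) r, DifferentiableAt ℂ F z) :
    ∮ z in C(-1, r), F z = 0 :=
  Complex.circleIntegral_eq_zero_of_differentiable_on_off_countable hr.le Set.countable_empty
    (fun z hz => (h z hz).continuousAt.continuousWithinAt)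
    (fun z hz => h z (Metric.ball_subset_closedBall hz.1))

lemma jt_contOn {K r : ℝ} (hr : 0 < r) (hrK : r < K) : ContinuousOn (jtK K) (Metric.sphere (-1) r) :=
  fun _ hv => (jt_deriv (sphere_ne hr hrK hv).2).continuousAt.continuousWithinAt

lemma jtK'_contOn {K r : ℝ} (hr : 0 < r) (hrK : r < K) :
    ContinuousOn (jtK' K) (Metric.sphere (-1) r) := by
  unfold jtK'
  refine ContinuousOn.div (by fun_prop) (by fun_prop) fun v hv => pow_ne_zero _ (sphere_ne hr hrK hv).2

lemma jt_zpow_contOn {K r : ℝ} (hr : 0 < r) (hrK : r < K) (j : ℤ) :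
    ContinuousOn (fun v => jtK K v ^ j) (Metric.sphere (-1) r) :=
  (jt_contOn hr hrK).zpow₀ j fun _ hv => Or.inl (jt_ne hr hrK hv)

lemma jt_integral {K r : ℝ} (hr : 0 < r) (hrK : r < K) (j : ℤ) :
    ∮ v in C(-1, r), jtK' K v * jtK K v ^ j = if j = -1 then 2 * (Real.pi : ℂ) * I else 0 := by
  split_ifs with h
  · subst h
    have e : ∮ v in C(-1, r), jtK' K v * jtK K v ^ (-1 : ℤ)
        = ∮ v in C(-1, r), ((v - (-1))⁻¹ - (v + 1 - K)⁻¹) := by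
      refine circleIntegral.integral_congr hr.le fun v hv => ?_
      obtain ⟨h1, h2⟩ := sphere_ne hr hrK hv
      have h3 : v - (-1) ≠ 0 := by rwa [sub_neg_eq_add]
      simp only [jtK', jtK, zpow_neg_one]
      rw [sub_neg_eq_add]
      field_simp
      ring
    rw [e, circleIntegral.integral_sub, circleIntegral.integral_sub_center_inv _ hr.ne', cauchy_zero hr,
      sub_zero]
    · intro z hz
      have := ball_ne hrK hz
      fun_prop (disch := assumption)
    · refine ContinuousOn.circleIntegrable hr.le (ContinuousOn.inv₀ (by fun_prop) fun v hv => ?_)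
      rw [sub_neg_eq_add]; exact (sphere_ne hr hrK hv).1
    · exact ContinuousOn.circleIntegrable hr.le (ContinuousOn.inv₀ (by fun_prop) fun v hv =>
        (sphere_ne hr hrK hv).2)
  · have hj : (j : ℂ) + 1 ≠ 0 := by
      intro h0; apply h; have : ((j + 1 : ℤ) : ℂ) = 0 := by push_cast; exact h0
      have := Int.cast_eq_zero.mp this; omega
    refine circleIntegral.integral_eq_zero_of_hasDerivWithinAt
      (f := fun v => jtK K v ^ (j + 1) / ((j : ℂ) + 1)) hr.le fun v hv => ?_
    have h1 := (hasDerivAt_zpow (j + 1) (jtK K v) (Or.inl (jt_ne hr hrK hv))).comp v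
      (jt_deriv (sphere_ne hr hrK hv).2)
    have h2 := h1.div_const ((j : ℂ) + 1)
    refine (h2.congr_deriv ?_).hasDerivWithinAt
    push_cast
    rw [add_sub_cancel_right]
    field_simp

/-- inner integral -/
lemma jac_inner {K r₁ r₂ : ℝ} (hr : 0 < r₁) (h12 : r₁ < r₂) (hrK : r₂ < K) {v₂ : ℂ}
    (hv₂ : v₂ ∈ Metric.sphere (-1 : ℂ) r₂) (n : ℕ) :
    ∮ v in C(-1, r₁), ((v₂ - v) ^ 2)⁻¹ * (jtK K v)⁻¹ ^ n
      = 2 * (Real.pi : ℂ) * I * (n * jtK' K v₂ * (jtK K v₂)⁻¹ ^ (n + 1)) := by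
  have h1K : r₁ < K := h12.trans hrK
  have hKp : 0 < K := hr.trans h1K
  have hr2 : 0 < r₂ := hr.trans h12
  obtain ⟨w2, w2K⟩ := sphere_ne hr2 hrK hv₂
  have t2 := jt_ne hr2 hrK hv₂
  have hK0 : (K : ℂ) ≠ 0 := by exact_mod_cast hKp.ne'
  have hne : ∀ v ∈ Metric.closedBall (-1 : ℂ) r₁, v₂ - v ≠ 0 := by
    intro v hv h0
    have e : v = v₂ := (sub_eq_zero.mp h0).symm
    rw [e] at hv
    simp only [Metric.mem_sphere, Metric.mem_closedBall] at hv hv₂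
    linarith
  have hsb : Metric.sphere (-1 : ℂ) r₁ ⊆ Metric.closedBall (-1) r₁ := Metric.sphere_subset_closedBall
  set s : ℂ → ℂ := fun v => (v₂ + 1 - K) / ((v + 1 - K) * (v₂ - v)) with hs
  have hscont : ContinuousOn s (Metric.sphere (-1) r₁) := by
    refine ContinuousOn.div (by fun_prop) (by fun_prop) fun v hv =>
      mul_ne_zero (sphere_ne hr h1K hv).2 (hne v (hsb hv))
  have htcont : ∀ n : ℕ, ContinuousOn (fun v => (jtK K v)⁻¹ ^ n) (Metric.sphere (-1) r₁) := fun n =>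
    ((jt_contOn hr h1K).inv₀ fun v hv => jt_ne hr h1K hv).pow n
  have hicont : ContinuousOn (fun v => ((v₂ - v) ^ 2)⁻¹) (Metric.sphere (-1) r₁) :=
    ContinuousOn.inv₀ (by fun_prop) fun v hv => pow_ne_zero _ (hne v (hsb hv))
  have hJ0 : ∮ v in C(-1, r₁), s v * (jtK K v)⁻¹ ^ 0 = 0 := by
    refine cauchy_zero hr fun v hv => ?_
    have h1 : (v + 1 - K) * (v₂ - v) ≠ 0 := mul_ne_zero (ball_ne h1K hv) (hne v hv)
    simp only [pow_zero, mul_one, hs]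
    fun_prop (disch := assumption)
  have hJrec : ∀ n : ℕ, jtK K v₂ * ∮ v in C(-1, r₁), s v * (jtK K v)⁻¹ ^ (n + 1)
      = (∮ v in C(-1, r₁), jtK' K v * jtK K v ^ (-((n : ℤ) + 1))) + ∮ v in C(-1, r₁), s v * (jtK K v)⁻¹ ^ n := by
    intro n
    rw [← circleIntegral.integral_const_mul, ← circleIntegral.integral_add]
    · refine circleIntegral.integral_congr hr.le fun v hv => ?_
      have t1 := jt_ne hr h1K hv
      obtain ⟨w1, w1K⟩ := sphere_ne hr h1K hv
      have hd := hne v (hsb hv)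
      have key : s v * (jtK K v₂ - jtK K v) = jtK' K v := by
        simp only [hs, jtK, jtK']; field_simp; ring
      have e : jtK K v ^ (-((n : ℤ) + 1)) = (jtK K v)⁻¹ ^ (n + 1) := by
        rw [zpow_neg, inv_pow]; norm_cast
      simp only [e]
      have e2 : (jtK K v)⁻¹ ^ n = jtK K v * (jtK K v)⁻¹ ^ (n + 1) := by
        rw [pow_succ]; field_simp
      rw [e2]
      linear_combination (jtK K v)⁻¹ ^ (n + 1) * key
    · exact ((jtK'_contOn hr h1K).mul (jt_zpow_contOn hr h1K _)).circleIntegrable hr.le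
    · exact (hscont.mul (htcont n)).circleIntegrable hr.le
  have hJ : ∀ n : ℕ, ∮ v in C(-1, r₁), s v * (jtK K v)⁻¹ ^ (n + 1)
      = 2 * (Real.pi : ℂ) * I * (jtK K v₂)⁻¹ ^ (n + 1) := by
    intro n
    apply mul_left_cancel₀ t2
    induction n with
    | zero => rw [hJrec, hJ0, jt_integral hr h1K]; simp; field_simp
    | succ n ih =>
      rw [hJrec, jt_integral hr h1K, if_neg (by push_cast; omega), mul_left_cancel₀ t2 ih]
      rw [zero_add, pow_succ _ (n + 1)]; field_simp
  induction n with
  | zero =>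
    rw [cauchy_zero hr]
    · simp
    · intro v hv
      have h1 : (v₂ - v) ^ 2 ≠ 0 := pow_ne_zero _ (hne v hv)
      simp only [pow_zero, mul_one]
      fun_prop (disch := assumption)
  | succ n ih =>
    apply mul_left_cancel₀ t2
    have : jtK K v₂ * ∮ v in C(-1, r₁), ((v₂ - v) ^ 2)⁻¹ * (jtK K v)⁻¹ ^ (n + 1)
        = (jtK' K v₂ * ∮ v in C(-1, r₁), s v * (jtK K v)⁻¹ ^ (n + 1))
          + ∮ v in C(-1, r₁), ((v₂ - v) ^ 2)⁻¹ * (jtK K v)⁻¹ ^ n := by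
      rw [← circleIntegral.integral_const_mul, ← circleIntegral.integral_const_mul,
        ← circleIntegral.integral_add]
      · refine circleIntegral.integral_congr hr.le fun v hv => ?_
        have t1 := jt_ne hr h1K hv
        obtain ⟨w1, w1K⟩ := sphere_ne hr h1K hv
        have hd := hne v (hsb hv)
        have key : ((v₂ - v) ^ 2)⁻¹ * (jtK K v₂ - jtK K v) = jtK' K v₂ * s v := by
          simp only [hs, jtK, jtK']; field_simp; ring
        have e2 : (jtK K v)⁻¹ ^ n = jtK K v * (jtK K v)⁻¹ ^ (n + 1) := by
          rw [pow_succ]; field_simp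
        simp only [e2]
        linear_combination (jtK K v)⁻¹ ^ (n + 1) * key
      · exact (continuousOn_const.mul (hscont.mul (htcont _))).circleIntegrable hr.le
      · exact (hicont.mul (htcont n)).circleIntegrable hr.le
    rw [this, hJ, ih, pow_succ _ (n + 1)]
    push_cast
    field_simp
    ring

lemma jac_inner_pos {K r₁ r₂ : ℝ} (hr : 0 < r₁) (h12 : r₁ < r₂) (hrK : r₂ < K) {v₂ : ℂ}
    (hv₂ : v₂ ∈ Metric.sphere (-1 : ℂ) r₂) (n : ℕ) :
    ∮ v in C(-1, r₁), ((v₂ - v) ^ 2)⁻¹ * (jtK K v) ^ n = 0 := by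
  have h1K : r₁ < K := h12.trans hrK
  refine cauchy_zero hr fun v hv => ?_
  have h0 : v₂ - v ≠ 0 := by
    intro h0
    have e : v = v₂ := (sub_eq_zero.mp h0).symm
    rw [e] at hv
    simp only [Metric.mem_sphere, Metric.mem_closedBall] at hv hv₂
    linarith
  have h1 : (v₂ - v) ^ 2 ≠ 0 := pow_ne_zero _ h0
  have h2 := (jt_deriv (ball_ne h1K hv)).differentiableAt
  fun_prop (disch := assumption)

lemma jac_f_eq (a M K p x0 q : ℝ) (hKpos : 0 < K) (hK : K = 1 + a + M)
    (hq : q = (1 + a) / K ^ 2) (hp : p = (a + M) * M / K ^ 2) (hx : x0 = 1 - p - q) (v : ℂ)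
    (h1 : v + 1 ≠ 0) (h2 : v + 1 - K ≠ 0) :
    v / (v + 1) * ((v - (a : ℂ)) / (v - a - M)) = (x0 : ℂ) + p * jtK K v + q * (jtK K v)⁻¹ := by
  have hK0 : (K : ℂ) ≠ 0 := by exact_mod_cast hKpos.ne'
  have e : v - a - M = v + 1 - K := by rw [hK]; push_cast; ring
  have hM : (M : ℂ) = K - 1 - a := by rw [hK]; push_cast; ring
  rw [e, hx, hp, hq, jtK]
  push_cast
  rw [hM]
  field_simp
  ring

theorem jac_contour (a M K p x0 q : ℝ) (hKpos : 0 < K) (hK : K = 1 + a + M)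
    (hq : q = (1 + a) / K ^ 2) (hp : p = (a + M) * M / K ^ 2) (hx : x0 = 1 - p - q)
    (k₁ k₂ : ℕ) (r₁ r₂ : ℝ) (hr : 0 < r₁) (h12 : r₁ < r₂) (hrK : r₂ < K) :
    (∮ v₂ in C(-1, r₂), (∮ v₁ in C(-1, r₁),
          ((v₂ - v₁) ^ 2)⁻¹ *
            (v₁ / (v₁ + 1) * ((v₁ - (a : ℂ)) / (v₁ - a - M))) ^ k₁ *
            (v₂ / (v₂ + 1) * ((v₂ - (a : ℂ)) / (v₂ - a - M))) ^ k₂))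
      = (2 * (Real.pi : ℂ) * I) ^ 2 * (jG p x0 q k₁ k₂ : ℂ) := by
  have h1K : r₁ < K := h12.trans hrK
  have hr2 : 0 < r₂ := hr.trans h12
  have hdecomp : ∀ (t : ℂ), t ≠ 0 → ((x0 : ℂ) + p * t + q * t⁻¹) ^ k₁
      = ∑ n ∈ Finset.range (k₁ + 1), (jA p x0 q k₁ (-(n : ℤ)) : ℂ) * t⁻¹ ^ n
        + ∑ n ∈ Finset.range k₁, (jA p x0 q k₁ ((n : ℤ) + 1) : ℂ) * t ^ (n + 1) := by
    intro t ht
    rw [jac_pow_expand p x0 q k₁ t ht, show 2 * k₁ + 1 = (k₁ + 1) + k₁ by ring, Finset.sum_range_add]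
    congr 1
    · rw [← Finset.sum_range_reflect]
      refine Finset.sum_congr rfl fun i hi => ?_
      have hi' : i ≤ k₁ := by simpa [Nat.lt_succ_iff] using hi
      have e : (((k₁ + 1 - 1 - i : ℕ) : ℤ) - k₁) = -(i : ℤ) := by omega
      rw [e, zpow_neg, zpow_natCast, inv_pow]
    · refine Finset.sum_congr rfl fun i hi => ?_
      have e : (((k₁ + 1 + i : ℕ) : ℤ) - k₁) = (i : ℤ) + 1 := by push_cast; ring
      rw [e]; norm_cast
  have hinner : ∀ v₂ ∈ Metric.sphere (-1 : ℂ) r₂, (∮ v₁ in C(-1, r₁),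
          ((v₂ - v₁) ^ 2)⁻¹ *
            (v₁ / (v₁ + 1) * ((v₁ - (a : ℂ)) / (v₁ - a - M))) ^ k₁ *
            (v₂ / (v₂ + 1) * ((v₂ - (a : ℂ)) / (v₂ - a - M))) ^ k₂)
      = ∑ n ∈ Finset.range (k₁ + 1), ∑ j ∈ Finset.range (2 * k₂ + 1),
          (2 * (Real.pi : ℂ) * I * (n * (jA p x0 q k₁ (-(n : ℤ)) : ℂ) * (jA p x0 q k₂ ((j : ℤ) - k₂) : ℂ)))
            * (jtK' K v₂ * jtK K v₂ ^ (((j : ℤ) - k₂) - (n + 1))) := by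
    intro v₂ hv₂
    obtain ⟨w2, w2K⟩ := sphere_ne hr2 hrK hv₂
    have t2 := jt_ne hr2 hrK hv₂
    have hne : ∀ v ∈ Metric.sphere (-1 : ℂ) r₁, v₂ - v ≠ 0 := by
      intro v hv h0
      have e : v = v₂ := (sub_eq_zero.mp h0).symm
      rw [e] at hv
      simp only [Metric.mem_sphere] at hv hv₂
      linarith
    have htcont : ∀ n : ℕ, ContinuousOn (fun v => (jtK K v)⁻¹ ^ n) (Metric.sphere (-1) r₁) := fun n =>
      ((jt_contOn hr h1K).inv₀ fun v hv => jt_ne hr h1K hv).pow n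
    have hicont : ContinuousOn (fun v => ((v₂ - v) ^ 2)⁻¹) (Metric.sphere (-1) r₁) :=
      ContinuousOn.inv₀ (by fun_prop) fun v hv => pow_ne_zero _ (hne v hv)
    set Fv := (v₂ / (v₂ + 1) * ((v₂ - (a : ℂ)) / (v₂ - a - M))) ^ k₂ with hFv
    have e1 : (∮ v₁ in C(-1, r₁), ((v₂ - v₁) ^ 2)⁻¹ *
            (v₁ / (v₁ + 1) * ((v₁ - (a : ℂ)) / (v₁ - a - M))) ^ k₁ * Fv)
        = ∮ v₁ in C(-1, r₁), (∑ n ∈ Finset.range (k₁ + 1),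
            ((jA p x0 q k₁ (-(n : ℤ)) : ℂ) * Fv) * (((v₂ - v₁) ^ 2)⁻¹ * (jtK K v₁)⁻¹ ^ n)
          + ∑ n ∈ Finset.range k₁, ((jA p x0 q k₁ ((n : ℤ) + 1) : ℂ) * Fv)
              * (((v₂ - v₁) ^ 2)⁻¹ * (jtK K v₁) ^ (n + 1))) := by
      refine circleIntegral.integral_congr hr.le fun v hv => ?_
      obtain ⟨w1, w1K⟩ := sphere_ne hr h1K hv
      rw [jac_f_eq a M K p x0 q hKpos hK hq hp hx v w1 w1K, hdecomp _ (jt_ne hr h1K hv), mul_add, add_mul,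
        Finset.mul_sum, Finset.mul_sum, Finset.sum_mul, Finset.sum_mul]
      congr 1 <;> exact Finset.sum_congr rfl fun i _ => by ring
    have ci1 : ∀ n : ℕ, CircleIntegrable (fun v₁ => ((jA p x0 q k₁ (-(n : ℤ)) : ℂ) * Fv) * (((v₂ - v₁) ^ 2)⁻¹ * (jtK K v₁)⁻¹ ^ n)) (-1) r₁ :=
      fun n => (continuousOn_const.mul (hicont.mul (htcont n))).circleIntegrable hr.le
    have ci2 : ∀ n : ℕ, CircleIntegrable (fun v₁ => ((jA p x0 q k₁ ((n : ℤ) + 1) : ℂ) * Fv)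
              * (((v₂ - v₁) ^ 2)⁻¹ * (jtK K v₁) ^ (n + 1))) (-1) r₁ :=
      fun n => (continuousOn_const.mul (hicont.mul ((jt_contOn hr h1K).pow _))).circleIntegrable hr.le
    rw [e1, circleIntegral.integral_add, circleIntegral.integral_fun_sum, circleIntegral.integral_fun_sum]
    · simp only [circleIntegral.integral_const_mul, jac_inner_pos hr h12 hrK hv₂,
        jac_inner hr h12 hrK hv₂, mul_zero, Finset.sum_const_zero, add_zero]
      refine Finset.sum_congr rfl fun n _ => ?_
      rw [hFv, jac_f_eq a M K p x0 q hKpos hK hq hp hx v₂ w2 w2K, jac_pow_expand p x0 q k₂ _ t2,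
        Finset.mul_sum, Finset.sum_mul]
      refine Finset.sum_congr rfl fun j _ => ?_
      have e : (jtK K v₂)⁻¹ ^ (n + 1) = (jtK K v₂ ^ ((n : ℤ) + 1))⁻¹ := by
        rw [inv_pow]; norm_cast
      rw [e, zpow_sub₀ t2 ((j : ℤ) - k₂)]
      ring
    · exact fun n _ => ci2 n
    · exact fun n _ => ci1 n
    · exact CircleIntegrable.fun_sum _ fun n _ => ci1 n
    · exact CircleIntegrable.fun_sum _ fun n _ => ci2 n
  rw [circleIntegral.integral_congr hr2.le hinner]
  have ci : ∀ (c : ℂ) (j : ℤ), CircleIntegrable (fun v => c * (jtK' K v * jtK K v ^ j)) (-1) r₂ := fun c j =>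
    (continuousOn_const.mul ((jtK'_contOn hr2 hrK).mul (jt_zpow_contOn hr2 hrK _))).circleIntegrable hr2.le
  rw [circleIntegral.integral_fun_sum]
  swap
  · exact fun n _ => CircleIntegrable.fun_sum _ fun j _ => ci _ _
  rw [jG]
  push_cast
  rw [Finset.mul_sum]
  refine Finset.sum_congr rfl fun n hn => ?_
  rw [circleIntegral.integral_fun_sum]
  swap
  · exact fun j _ => ci _ _
  simp only [circleIntegral.integral_const_mul, jt_integral hr2 hrK]
  by_cases hnk : n ≤ k₂
  · rw [Finset.sum_eq_single (n + k₂)]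
    · rw [if_pos (by push_cast; ring)]
      have : (((n + k₂ : ℕ) : ℤ) - k₂) = n := by push_cast; ring
      rw [this]; ring
    · intro b _ hb
      rw [if_neg (by omega), mul_zero]
    · intro h; exfalso; apply h; rw [Finset.mem_range]; omega
  · rw [Finset.sum_eq_zero, jA_eq_zero p x0 q k₂ n (by rw [lt_abs]; omega)]
    · simp
    · intro b hb
      rw [Finset.mem_range] at hb
      rw [if_neg (by omega), mul_zero]
end JacContour
/-! Part: the Jacobi ensemble as a probability measure -/
section JacMeasure

/-- The unit cube. -/
def jCube (N : ℕ) : Set (Fin N → ℝ) := Set.univ.pi fun _ : Fin N => Set.Icc (0 : ℝ) 1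

lemma mem_jCube {N : ℕ} {x : Fin N → ℝ} : x ∈ jCube N ↔ ∀ i, 0 ≤ x i ∧ x i ≤ 1 := by
  simp only [jCube, Set.mem_pi, Set.mem_univ, true_imp_iff, Set.mem_Icc]

lemma jCube_compact (N : ℕ) : IsCompact (jCube N) :=
  isCompact_univ_pi fun _ => isCompact_Icc

lemma jCube_meas (N : ℕ) : MeasurableSet (jCube N) := (jCube_compact N).isClosed.measurableSet

lemma jac_measurable (θ α : ℝ) (M N : ℕ) : Measurable (jacobiDensity θ α M N) := by
  unfold jacobiDensity
  fun_prop

lemma jac_nonneg (θ α : ℝ) (M N : ℕ) {x : Fin N → ℝ} (hx : x ∈ jCube N) :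
    0 ≤ jacobiDensity θ α M N x := by
  rw [mem_jCube] at hx
  unfold jacobiDensity
  refine mul_nonneg (Finset.prod_nonneg fun p _ => by positivity) (Finset.prod_nonneg fun i _ => ?_)
  exact mul_nonneg (Real.rpow_nonneg (hx i).1 _) (Real.rpow_nonneg (by linarith [(hx i).2]) _)

lemma jac_beta_int (a b : ℝ) (ha : 0 < a) (hb : 0 < b) :
    IntegrableOn (fun x : ℝ => x ^ (a - 1) * (1 - x) ^ (b - 1)) (Set.Icc 0 1) := by
  have h := Complex.betaIntegral_convergent (u := a) (v := b) (by simpa) (by simpa)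
  rw [intervalIntegrable_iff_integrableOn_Icc_of_le zero_le_one] at h
  refine IntegrableOn.congr_fun h.re ?_ measurableSet_Icc
  intro x hx
  simp only
  have h1 : ((x : ℂ) ^ ((a : ℂ) - 1) * (1 - (x : ℂ)) ^ ((b : ℂ) - 1))
      = ((x ^ (a - 1) * (1 - x) ^ (b - 1) : ℝ) : ℂ) := by
    rw [Complex.ofReal_mul, Complex.ofReal_cpow hx.1, Complex.ofReal_cpow (by linarith [hx.2])]
    push_cast; rfl
  rw [h1]; simp

lemma jac_integrable (θ α : ℝ) (M N : ℕ) (hθ : 0 < θ) (hα : 0 < α) (hM : N ≤ M) :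
    IntegrableOn (jacobiDensity θ α M N) (jCube N) := by
  have h1 : IntegrableOn (fun x : Fin N → ℝ => ∏ i : Fin N,
      (x i ^ (θ * α - 1) * (1 - x i) ^ (θ * ((M : ℝ) - (N : ℝ)) + θ - 1))) (jCube N) := by
    unfold IntegrableOn jCube
    rw [volume_pi, Measure.restrict_pi_pi]
    refine Integrable.fintype_prod (f := fun (_ : Fin N) (y : ℝ) =>
      y ^ (θ * α - 1) * (1 - y) ^ (θ * ((M : ℝ) - (N : ℝ)) + θ - 1)) fun i => ?_
    have : (N : ℝ) ≤ M := by exact_mod_cast hM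
    exact jac_beta_int _ _ (by positivity) (by nlinarith)
  refine Integrable.mono h1 (jac_measurable θ α M N).aestronglyMeasurable ?_
  refine (ae_restrict_iff' (jCube_meas N)).2 (Filter.Eventually.of_forall fun x hx => ?_)
  unfold jacobiDensity
  rw [norm_mul]
  refine mul_le_of_le_one_left (norm_nonneg _) ?_
  rw [Real.norm_of_nonneg (Finset.prod_nonneg fun p _ => by positivity)]
  refine Finset.prod_le_one (fun p _ => by positivity) fun p _ => ?_
  rw [mem_jCube] at hx
  refine Real.rpow_le_one (abs_nonneg _) ?_ (by positivity)
  rw [abs_le]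
  constructor <;> linarith [(hx p.1).1, (hx p.1).2, (hx p.2).1, (hx p.2).2]

lemma jac_raw_univ (θ α : ℝ) (M N : ℕ) : jacobiMeasureRaw θ α M N Set.univ
    = ∫⁻ x in jCube N, ENNReal.ofReal (jacobiDensity θ α M N x) := by
  unfold jacobiMeasureRaw
  rw [withDensity_apply _ MeasurableSet.univ, Measure.restrict_univ]; rfl

lemma jac_raw_ne_top (θ α : ℝ) (M N : ℕ) (hθ : 0 < θ) (hα : 0 < α) (hM : N ≤ M) :
    jacobiMeasureRaw θ α M N Set.univ ≠ ⊤ := by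
  rw [jac_raw_univ]
  exact (jac_integrable θ α M N hθ hα hM).lintegral_lt_top.ne

lemma jac_raw_ne_zero (θ α : ℝ) (M N : ℕ) : jacobiMeasureRaw θ α M N Set.univ ≠ 0 := by
  rw [jac_raw_univ]
  refine ne_of_gt ?_
  rw [lintegral_pos_iff_support (jac_measurable θ α M N).ennreal_ofReal]
  let U : Set (Fin N → ℝ) := (⋂ i : Fin N, {x | 0 < x i ∧ x i < 1}) ∩
    (⋂ i : Fin N, ⋂ j : Fin N, {x | i < j → x i ≠ x j})
  have hU : IsOpen U := by
    refine IsOpen.inter (isOpen_iInter_of_finite fun i => ?_)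
      (isOpen_iInter_of_finite fun i => isOpen_iInter_of_finite fun j => ?_)
    · exact (isOpen_lt continuous_const (continuous_apply i)).inter
        (isOpen_lt (continuous_apply i) continuous_const)
    · by_cases h : i < j
      · simp only [h, true_imp_iff]
        exact isOpen_ne_fun (continuous_apply i) (continuous_apply j)
      · simp [h]
  have hne : U.Nonempty := by
    refine ⟨fun i => ((i : ℝ) + 1) / (N + 1), ?_, ?_⟩
    · simp only [Set.mem_iInter, Set.mem_ofPred_eq]
      intro i
      refine ⟨by positivity, ?_⟩
      rw [div_lt_one (by positivity)]
      have : (i : ℝ) < N := by exact_mod_cast i.2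
      linarith
    · simp only [Set.mem_iInter, Set.mem_ofPred_eq]
      intro i j hij h
      have h0 : (N : ℝ) + 1 ≠ 0 := by positivity
      rw [div_left_inj' h0, add_left_inj, Nat.cast_inj] at h
      exact hij.ne (Fin.ext h)
  have hpos := hU.measure_pos volume hne
  have hsub : U ⊆ (Function.support fun x => ENNReal.ofReal (jacobiDensity θ α M N x)) ∩ jCube N := by
    rintro x ⟨h1, h2⟩
    simp only [Set.mem_iInter, Set.mem_ofPred_eq] at h1 h2
    refine ⟨?_, mem_jCube.2 fun i => ⟨(h1 i).1.le, (h1 i).2.le⟩⟩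
    rw [Function.mem_support]
    refine (ENNReal.ofReal_pos.2 ?_).ne'
    unfold jacobiDensity
    refine mul_pos (Finset.prod_pos fun p hp => ?_) (Finset.prod_pos fun i _ => ?_)
    · rw [Finset.mem_filter] at hp
      exact Real.rpow_pos_of_pos (abs_pos.2 (sub_ne_zero.2 (h2 _ _ hp.2))) _
    · exact mul_pos (Real.rpow_pos_of_pos (h1 i).1 _)
        (Real.rpow_pos_of_pos (by linarith [(h1 i).2]) _)
  have : volume.restrict (jCube N) (Function.support fun x => ENNReal.ofReal (jacobiDensity θ α M N x))
      = volume ((Function.support fun x => ENNReal.ofReal (jacobiDensity θ α M N x)) ∩ jCube N) :=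
    Measure.restrict_apply' (jCube_meas N)
  rw [this]
  exact lt_of_lt_of_le hpos (measure_mono hsub)

lemma jac_prob (θ α : ℝ) (M N : ℕ) (hθ : 0 < θ) (hα : 0 < α) (hM : N ≤ M) :
    IsProbabilityMeasure (jacobiEnsemble θ α M N) := by
  constructor
  unfold jacobiEnsemble
  rw [Measure.smul_apply, smul_eq_mul]
  exact ENNReal.inv_mul_cancel (jac_raw_ne_zero θ α M N) (jac_raw_ne_top θ α M N hθ hα hM)

lemma jac_integral (θ α : ℝ) (M N : ℕ) (f : (Fin N → ℝ) → ℝ) :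
    ∫ y, f y ∂ jacobiEnsemble θ α M N = (jacobiMeasureRaw θ α M N Set.univ)⁻¹.toReal *
      ∫ y in jCube N, jacobiDensity θ α M N y * f y := by
  unfold jacobiEnsemble
  rw [integral_smul_measure, smul_eq_mul]
  congr 1
  unfold jacobiMeasureRaw
  rw [integral_withDensity_eq_integral_toReal_smul (jac_measurable θ α M N).ennreal_ofReal
    (Filter.Eventually.of_forall fun x => ENNReal.ofReal_lt_top)]
  refine setIntegral_congr_fun (jCube_meas N) fun x hx => ?_
  simp only [smul_eq_mul]
  rw [ENNReal.toReal_ofReal (jac_nonneg θ α M N hx)]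

lemma jac_ae (θ α : ℝ) (M N : ℕ) : ∀ᵐ y ∂ jacobiEnsemble θ α M N, y ∈ jCube N := by
  unfold jacobiEnsemble
  refine Measure.ae_smul_measure ?_ _
  unfold jacobiMeasureRaw
  exact (withDensity_absolutelyContinuous _ _).ae_le (ae_restrict_mem (jCube_meas N))

lemma jac_cont_integrable (θ α : ℝ) (M N : ℕ) (hθ : 0 < θ) (hα : 0 < α) (hM : N ≤ M)
    (f : C(Fin N → ℝ, ℝ)) : Integrable f (jacobiEnsemble θ α M N) := by
  have := jac_prob θ α M N hθ hα hM
  obtain ⟨C, hC⟩ := (jCube_compact N).exists_bound_of_continuousOn f.continuous.continuousOn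
  refine Integrable.of_bound f.continuous.aestronglyMeasurable C ?_
  filter_upwards [jac_ae θ α M N] with y hy using hC y hy

end JacMeasure
/-! Part: change of variables and loop equations -/
section JacLoop

/-- Divided difference of `x^(n+1)(1-x)`. -/
def jq (n : ℕ) (x y : ℝ) : ℝ :=
  ∑ ab ∈ Finset.HasAntidiagonal.antidiagonal n, x ^ ab.1 * y ^ ab.2
    - ∑ ab ∈ Finset.HasAntidiagonal.antidiagonal (n + 1), x ^ ab.1 * y ^ ab.2

lemma jac_antidiag_geom (n : ℕ) (x y : ℝ) :
    (x - y) * ∑ ab ∈ Finset.HasAntidiagonal.antidiagonal n, x ^ ab.1 * y ^ ab.2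
      = x ^ (n + 1) - y ^ (n + 1) := by
  rw [Finset.Nat.sum_antidiagonal_eq_sum_range_succ (fun a b => x ^ a * y ^ b), mul_comm,
    ← geom_sum₂_mul]
  simp

lemma jq_mul (n : ℕ) (x y : ℝ) : (x - y) * jq n x y
    = x ^ (n + 1) * (1 - x) - y ^ (n + 1) * (1 - y) := by
  unfold jq
  rw [mul_sub, jac_antidiag_geom, jac_antidiag_geom]; ring

lemma jac_antidiag_diag (n : ℕ) (x : ℝ) :
    ∑ ab ∈ Finset.HasAntidiagonal.antidiagonal n, x ^ ab.1 * x ^ ab.2 = (n + 1) * x ^ n := by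
  rw [Finset.sum_congr rfl (g := fun _ => x ^ n)]
  · simp
  · intro ab h
    rw [Finset.HasAntidiagonal.mem_antidiagonal] at h
    rw [← pow_add, h]

lemma jq_diag (n : ℕ) (x : ℝ) : jq n x x = (n + 1) * x ^ n - (n + 2) * x ^ (n + 1) := by
  unfold jq
  rw [jac_antidiag_diag, jac_antidiag_diag]; push_cast; ring

lemma jac_antidiag_bound (n : ℕ) (x y : ℝ) (hx : 0 ≤ x ∧ x ≤ 1) (hy : 0 ≤ y ∧ y ≤ 1) :
    0 ≤ ∑ ab ∈ Finset.HasAntidiagonal.antidiagonal n, x ^ ab.1 * y ^ ab.2 ∧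
    ∑ ab ∈ Finset.HasAntidiagonal.antidiagonal n, x ^ ab.1 * y ^ ab.2 ≤ n + 1 := by
  constructor
  · exact Finset.sum_nonneg fun ab _ => mul_nonneg (pow_nonneg hx.1 _) (pow_nonneg hy.1 _)
  · calc _ ≤ ∑ ab ∈ Finset.HasAntidiagonal.antidiagonal n, (1 : ℝ) :=
          Finset.sum_le_sum fun ab _ => mul_le_one₀ (pow_le_one₀ hx.1 hx.2) (pow_nonneg hy.1 _)
            (pow_le_one₀ hy.1 hy.2)
      _ = n + 1 := by simp

lemma jq_bound (n : ℕ) (x y : ℝ) (hx : 0 ≤ x ∧ x ≤ 1) (hy : 0 ≤ y ∧ y ≤ 1) :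
    |jq n x y| ≤ n + 2 := by
  obtain ⟨h1, h2⟩ := jac_antidiag_bound n x y hx hy
  obtain ⟨h3, h4⟩ := jac_antidiag_bound (n + 1) x y hx hy
  push_cast at h4
  unfold jq
  rw [abs_le]; constructor <;> linarith

lemma jq_continuous (n : ℕ) : Continuous fun z : ℝ × ℝ => jq n z.1 z.2 := by
  unfold jq; fun_prop

lemma jq_contDiff (n : ℕ) : ContDiff ℝ 1 fun z : ℝ × ℝ => jq n z.1 z.2 := by
  unfold jq; fun_prop

/-- Smallness of the deformation parameter. -/
lemma jac_one_add_pos {n : ℕ} {ε u : ℝ} (hε : |ε| < 1 / ((n : ℝ) + 2)) (hu : |u| ≤ n + 2) :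
    0 < 1 + ε * u := by
  have h2 : |ε * u| < 1 := by
    rw [abs_mul]
    have : |ε| * |u| ≤ |ε| * (n + 2) := by gcongr
    have h3 : |ε| * ((n : ℝ) + 2) < 1 := by rwa [lt_div_iff₀ (by positivity)] at hε
    linarith
  linarith [(abs_lt.1 h2).1]

/-- One-dimensional deformation. -/
def jphi (n : ℕ) (ε x : ℝ) : ℝ := x + ε * (x ^ (n + 1) * (1 - x))

lemma jphi_sub (n : ℕ) (ε x y : ℝ) : jphi n ε x - jphi n ε y = (x - y) * (1 + ε * jq n x y) := by
  unfold jphi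
  linear_combination (-ε) * jq_mul n x y

lemma jphi_hasDerivAt (n : ℕ) (ε x : ℝ) : HasDerivAt (jphi n ε) (1 + ε * jq n x x) x := by
  unfold jphi
  have h := ((hasDerivAt_id x).fun_add
    (((hasDerivAt_pow (n + 1) x).fun_mul ((hasDerivAt_id x).const_sub 1)).const_mul ε))
  refine h.congr_deriv ?_
  rw [jq_diag]; push_cast; simp only [id]; ring

lemma jphi_strictMono {n : ℕ} {ε : ℝ} (hε : |ε| < 1 / ((n : ℝ) + 2)) :
    StrictMonoOn (jphi n ε) (Set.Icc 0 1) := by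
  intro x hx y hy hxy
  have h1 := jac_one_add_pos hε (jq_bound n x y hx hy)
  have h2 := jphi_sub n ε x y
  nlinarith

lemma jphi_image {n : ℕ} {ε : ℝ} (hε : |ε| < 1 / ((n : ℝ) + 2)) :
    jphi n ε '' Set.Icc 0 1 = Set.Icc 0 1 := by
  have h0 : jphi n ε 0 = 0 := by simp [jphi]
  have h1 : jphi n ε 1 = 1 := by simp [jphi]
  have hm := (jphi_strictMono hε).monotoneOn
  apply Set.Subset.antisymm
  · rintro _ ⟨x, hx, rfl⟩
    exact ⟨h0 ▸ hm (by simp) hx hx.1, h1 ▸ hm hx (by simp) hx.2⟩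
  · have hc : ContinuousOn (jphi n ε) (Set.Icc 0 1) := by unfold jphi; fun_prop
    have := intermediate_value_Icc (zero_le_one (α := ℝ)) hc
    rwa [h0, h1] at this

/-- Multidimensional deformation. -/
def jPhi (N n : ℕ) (ε : ℝ) (x : Fin N → ℝ) : Fin N → ℝ := fun i => jphi n ε (x i)

lemma jPhi_image {N n : ℕ} {ε : ℝ} (hε : |ε| < 1 / ((n : ℝ) + 2)) :
    jPhi N n ε '' jCube N = jCube N := by
  have := Set.piMap_image_univ_pi (fun (_ : Fin N) => jphi n ε) (fun _ => Set.Icc 0 1)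
  rw [jphi_image hε] at this
  exact this

lemma jPhi_injOn {N n : ℕ} {ε : ℝ} (hε : |ε| < 1 / ((n : ℝ) + 2)) :
    Set.InjOn (jPhi N n ε) (jCube N) := by
  intro x hx y hy h
  rw [mem_jCube] at hx hy
  funext i
  exact (jphi_strictMono hε).injOn (hx i) (hy i) (congrFun h i)

/-- The derivative of the deformation. -/
noncomputable def jDPhi (N n : ℕ) (ε : ℝ) (x : Fin N → ℝ) : (Fin N → ℝ) →L[ℝ] (Fin N → ℝ) :=
  ContinuousLinearMap.pi fun i =>
    ((1 + ε * jq n (x i) (x i)) • ContinuousLinearMap.proj (R := ℝ) (φ := fun _ : Fin N => ℝ) i)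

lemma jPhi_hasFDerivAt (N n : ℕ) (ε : ℝ) (x : Fin N → ℝ) :
    HasFDerivAt (jPhi N n ε) (jDPhi N n ε x) x := by
  unfold jDPhi
  refine hasFDerivAt_pi.2 fun i => ?_
  exact (jphi_hasDerivAt n ε (x i)).comp_hasFDerivAt x (hasFDerivAt_apply i x)

lemma jDPhi_det (N n : ℕ) (ε : ℝ) (x : Fin N → ℝ) :
    (jDPhi N n ε x).det = ∏ i, (1 + ε * jq n (x i) (x i)) := by
  have h := LinearMap.det_pi (R := ℝ) (M := ℝ)
    (fun i : Fin N => (1 + ε * jq n (x i) (x i)) • (LinearMap.id : ℝ →ₗ[ℝ] ℝ))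
  have e : ((jDPhi N n ε x : (Fin N → ℝ) →L[ℝ] (Fin N → ℝ)) : (Fin N → ℝ) →ₗ[ℝ] (Fin N → ℝ))
      = LinearMap.pi fun i => ((1 + ε * jq n (x i) (x i)) • (LinearMap.id : ℝ →ₗ[ℝ] ℝ)) ∘ₗ LinearMap.proj i := by
    ext; simp [jDPhi]
  rw [ContinuousLinearMap.det, e, h]
  simp

/-- The ratio of deformed and original densities (with Jacobian). -/
noncomputable def jR (θ A b : ℝ) (N n : ℕ) (ε : ℝ) (x : Fin N → ℝ) : ℝ :=
  (∏ p ∈ Finset.univ.filter (fun p : Fin N × Fin N => p.1 < p.2),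
      (1 + ε * jq n (x p.1) (x p.2)) ^ (2 * θ)) *
    ∏ i : Fin N, ((1 + ε * (x i ^ n * (1 - x i))) ^ A * (1 + ε * (-x i ^ (n + 1))) ^ b
      * (1 + ε * jq n (x i) (x i)))

lemma jac_aux_bound1 (n : ℕ) (x : ℝ) (hx : 0 ≤ x ∧ x ≤ 1) : |x ^ n * (1 - x)| ≤ n + 2 := by
  have h1 := pow_le_one₀ (n := n) hx.1 hx.2
  have h2 := pow_nonneg hx.1 n
  have : (0:ℝ) ≤ n := by positivity
  rw [abs_of_nonneg (mul_nonneg h2 (by linarith [hx.2]))]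
  nlinarith [hx.1, hx.2]

lemma jac_aux_bound2 (n : ℕ) (x : ℝ) (hx : 0 ≤ x ∧ x ≤ 1) : |-x ^ (n + 1)| ≤ n + 2 := by
  have h1 := pow_le_one₀ (n := n + 1) hx.1 hx.2
  have h2 := pow_nonneg hx.1 (n + 1)
  have : (0:ℝ) ≤ n := by positivity
  rw [abs_neg, abs_of_nonneg h2]
  linarith

lemma jac_transform (θ α : ℝ) (M N n : ℕ) {ε : ℝ} (hε : |ε| < 1 / ((n : ℝ) + 2))
    {x : Fin N → ℝ} (hx : x ∈ jCube N) :
    |(jDPhi N n ε x).det| * jacobiDensity θ α M N (jPhi N n ε x)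
      = jacobiDensity θ α M N x *
        jR θ (θ * α - 1) (θ * ((M : ℝ) - (N : ℝ)) + θ - 1) N n ε x := by
  rw [mem_jCube] at hx
  have h1 : ∀ i j, 0 < 1 + ε * jq n (x i) (x j) := fun i j =>
    jac_one_add_pos hε (jq_bound n _ _ (hx i) (hx j))
  rw [jDPhi_det, abs_of_pos (Finset.prod_pos fun i _ => h1 i i)]
  unfold jacobiDensity jR
  have e1 : ∀ p : Fin N × Fin N, |jPhi N n ε x p.1 - jPhi N n ε x p.2| ^ (2 * θ)
      = |x p.1 - x p.2| ^ (2 * θ) * (1 + ε * jq n (x p.1) (x p.2)) ^ (2 * θ) := by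
    intro p
    unfold jPhi
    rw [jphi_sub, abs_mul, abs_of_pos (h1 _ _), Real.mul_rpow (abs_nonneg _) (h1 _ _).le]
  have e2 : ∀ i : Fin N, ∀ s : ℝ, (jPhi N n ε x i) ^ s
      = x i ^ s * (1 + ε * (x i ^ n * (1 - x i))) ^ s := by
    intro i s
    rw [← Real.mul_rpow (hx i).1 (jac_one_add_pos hε (jac_aux_bound1 n _ (hx i))).le]
    congr 1
    simp only [jPhi, jphi]; ring
  have e3 : ∀ i : Fin N, ∀ s : ℝ, (1 - jPhi N n ε x i) ^ s
      = (1 - x i) ^ s * (1 + ε * (-x i ^ (n + 1))) ^ s := by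
    intro i s
    rw [← Real.mul_rpow (by linarith [(hx i).2]) (jac_one_add_pos hε (jac_aux_bound2 n _ (hx i))).le]
    congr 1
    simp only [jPhi, jphi]; ring
  simp only [e1, e2, e3, Finset.prod_mul_distrib]
  ring

lemma jac_change (θ α : ℝ) (M N n : ℕ) {ε : ℝ} (hε : |ε| < 1 / ((n : ℝ) + 2))
    (F : (Fin N → ℝ) → ℝ) :
    ∫ x in jCube N, jacobiDensity θ α M N x *
      (jR θ (θ * α - 1) (θ * ((M : ℝ) - (N : ℝ)) + θ - 1) N n ε x * F (jPhi N n ε x))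
    = ∫ x in jCube N, jacobiDensity θ α M N x * F x := by
  have h := integral_image_eq_integral_abs_det_fderiv_smul volume (jCube_meas N)
    (fun x _ => (jPhi_hasFDerivAt N n ε x).hasFDerivWithinAt) (jPhi_injOn hε)
    (fun x => jacobiDensity θ α M N x * F x)
  rw [jPhi_image hε] at h
  rw [h]
  refine setIntegral_congr_fun (jCube_meas N) fun x hx => ?_
  simp only [smul_eq_mul]
  rw [← mul_assoc, ← mul_assoc, jac_transform θ α M N n hε hx]

/-- The logarithmic derivative of `jR` at `0`. -/
noncomputable def jL (θ A b : ℝ) (N n : ℕ) (x : Fin N → ℝ) : ℝ :=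
  (∑ p ∈ Finset.univ.filter (fun p : Fin N × Fin N => p.1 < p.2), 2 * θ * jq n (x p.1) (x p.2))
  + ∑ i : Fin N, (A * (x i ^ n * (1 - x i)) + b * (-x i ^ (n + 1)) + jq n (x i) (x i))

lemma jac_rpow_deriv (s c : ℝ) : HasDerivAt (fun ε : ℝ => (1 + ε * c) ^ s) (s * c) 0 := by
  have h1 : HasDerivAt (fun ε : ℝ => 1 + ε * c) c 0 := by
    simpa using ((hasDerivAt_id (0:ℝ)).mul_const c).const_add 1
  have := h1.rpow_const (p := s) (by left; simp)
  refine this.congr_deriv ?_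
  simp; ring

lemma jR_zero (θ A b : ℝ) (N n : ℕ) (x : Fin N → ℝ) : jR θ A b N n 0 x = 1 := by
  simp [jR]

lemma jR_deriv (θ A b : ℝ) (N n : ℕ) (x : Fin N → ℝ) :
    HasDerivAt (fun ε => jR θ A b N n ε x) (jL θ A b N n x) 0 := by
  have hlin : ∀ c : ℝ, HasDerivAt (fun ε : ℝ => 1 + ε * c) c 0 := fun c => by
    simpa using ((hasDerivAt_id (0:ℝ)).mul_const c).const_add 1
  have h1 := HasDerivAt.fun_finsetProd (u := Finset.univ.filter (fun p : Fin N × Fin N => p.1 < p.2))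
    (f := fun p ε => (1 + ε * jq n (x p.1) (x p.2)) ^ (2 * θ)) (x := (0:ℝ))
    (fun p _ => jac_rpow_deriv (2 * θ) (jq n (x p.1) (x p.2)))
  have h2 := HasDerivAt.fun_finsetProd (u := (Finset.univ : Finset (Fin N)))
    (f := fun i ε => ((1 + ε * (x i ^ n * (1 - x i))) ^ A * (1 + ε * (-x i ^ (n + 1))) ^ b
      * (1 + ε * jq n (x i) (x i)))) (x := (0:ℝ))
    (fun i _ => ((jac_rpow_deriv A _).fun_mul (jac_rpow_deriv b _)).fun_mul (hlin _))
  have h := h1.fun_mul h2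
  unfold jR
  refine h.congr_deriv ?_
  simp [jL]

lemma jR_contDiffAt (θ A b : ℝ) (N n : ℕ) {ε : ℝ} (hε : |ε| < 1 / ((n : ℝ) + 2))
    {x : Fin N → ℝ} (hx : x ∈ jCube N) :
    ContDiffAt ℝ 1 (fun z : ℝ × (Fin N → ℝ) => jR θ A b N n z.1 z.2) (ε, x) := by
  rw [mem_jCube] at hx
  have hq : ∀ i j : Fin N, ContDiffAt ℝ 1 (fun z : ℝ × (Fin N → ℝ) => 1 + z.1 * jq n (z.2 i) (z.2 j)) (ε, x) := by
    intro i j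
    have : ContDiff ℝ 1 (fun z : ℝ × (Fin N → ℝ) => 1 + z.1 * jq n (z.2 i) (z.2 j)) := by
      unfold jq; fun_prop
    exact this.contDiffAt
  unfold jR
  refine ContDiffAt.mul (contDiffAt_prod fun p _ => ?_) (contDiffAt_prod fun i _ => ?_)
  · exact (hq _ _).rpow_const_of_ne (jac_one_add_pos hε (jq_bound n _ _ (hx _) (hx _))).ne'
  · refine ContDiffAt.mul (ContDiffAt.mul ?_ ?_) (hq _ _)
    · refine ContDiffAt.rpow_const_of_ne (by fun_prop) (jac_one_add_pos hε (jac_aux_bound1 n _ (hx _))).ne'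
    · refine ContDiffAt.rpow_const_of_ne (by fun_prop) (jac_one_add_pos hε (jac_aux_bound2 n _ (hx _))).ne'

lemma jac_loop_raw (θ α : ℝ) (M N n : ℕ) (hθ : 0 < θ) (hα : 0 < α) (hM : N ≤ M)
    (F D : (Fin N → ℝ) → ℝ) (hF : ContDiff ℝ 1 F)
    (hD : ∀ x, HasDerivAt (fun ε => F (jPhi N n ε x)) (D x) 0) :
    ∫ x in jCube N, jacobiDensity θ α M N x *
      (F x * jL θ (θ * α - 1) (θ * ((M : ℝ) - (N : ℝ)) + θ - 1) N n x + D x) = 0 := by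
  set A := θ * α - 1
  set b := θ * ((M : ℝ) - (N : ℝ)) + θ - 1
  let G : ℝ × (Fin N → ℝ) → ℝ := fun z => jR θ A b N n z.1 z.2 * F (jPhi N n z.1 z.2)
  set δ : ℝ := 1 / ((n : ℝ) + 2) / 2 with hδ
  have hδ0 : 0 < δ := by positivity
  have hsm : ∀ ε ∈ Set.Icc (-δ) δ, |ε| < 1 / ((n : ℝ) + 2) := by
    intro ε h
    have : |ε| ≤ δ := abs_le.2 h
    have : δ < 1 / ((n : ℝ) + 2) := half_lt_self (by positivity)
    linarith
  have hPhi : ContDiff ℝ 1 (fun z : ℝ × (Fin N → ℝ) => jPhi N n z.1 z.2) := by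
    unfold jPhi jphi; fun_prop
  have hG : ∀ ε ∈ Set.Icc (-δ) δ, ∀ x ∈ jCube N, ContDiffAt ℝ 1 G (ε, x) := fun ε hε x hx =>
    (jR_contDiffAt θ A b N n (hsm ε hε) hx).mul (hF.comp hPhi).contDiffAt
  let G' : ℝ → (Fin N → ℝ) → ℝ := fun ε x => fderiv ℝ G (ε, x) (1, 0)
  have hG' : ∀ ε ∈ Set.Icc (-δ) δ, ∀ x ∈ jCube N, HasDerivAt (fun e => G (e, x)) (G' ε x) ε := by
    intro ε hε x hx
    have h1 := ((hG ε hε x hx).differentiableAt one_ne_zero).hasFDerivAt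
    have h2 : HasDerivAt (fun e : ℝ => (e, x)) ((1 : ℝ), (0 : Fin N → ℝ)) ε :=
      (hasDerivAt_id ε).prodMk (hasDerivAt_const ε x)
    exact h1.comp_hasDerivAt ε h2
  have hG'c : ContinuousOn (fun z : ℝ × (Fin N → ℝ) => G' z.1 z.2) (Set.Icc (-δ) δ ×ˢ jCube N) := by
    rintro ⟨ε, x⟩ ⟨hε, hx⟩
    have h1 := (hG ε hε x hx).fderiv_right (m := 0) (by norm_num)
    exact (h1.continuousAt.clm_apply continuousAt_const).continuousWithinAt
  have hGc : ContinuousOn G (Set.Icc (-δ) δ ×ˢ jCube N) := by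
    rintro ⟨ε, x⟩ ⟨hε, hx⟩
    exact (hG ε hε x hx).continuousAt.continuousWithinAt
  have hK : IsCompact (Set.Icc (-δ) δ ×ˢ jCube N) := isCompact_Icc.prod (jCube_compact N)
  obtain ⟨C, hC⟩ := hK.exists_bound_of_continuousOn hG'c
  obtain ⟨C0, hC0⟩ := hK.exists_bound_of_continuousOn hGc
  have hintg := jac_integrable θ α M N hθ hα hM
  have hslice : ∀ ε ∈ Set.Icc (-δ) δ, AEStronglyMeasurable (fun x => G (ε, x)) (volume.restrict (jCube N)) := by
    intro ε hε
    refine ContinuousOn.aestronglyMeasurable ?_ (jCube_meas N)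
    exact hGc.comp (by fun_prop) fun x hx => ⟨hε, hx⟩
  have h0 : (0 : ℝ) ∈ Set.Icc (-δ) δ := ⟨by linarith, hδ0.le⟩
  have hslice' : AEStronglyMeasurable (fun x => G' 0 x) (volume.restrict (jCube N)) := by
    refine ContinuousOn.aestronglyMeasurable ?_ (jCube_meas N)
    exact hG'c.comp (f := fun x => ((0:ℝ), x)) (by fun_prop) fun x hx => ⟨h0, hx⟩
  have hmeas := (jac_measurable θ α M N).aestronglyMeasurable (μ := volume.restrict (jCube N))
  have key := hasDerivAt_integral_of_dominated_loc_of_deriv_le (μ := volume.restrict (jCube N))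
    (F := fun ε x => jacobiDensity θ α M N x * G (ε, x)) (x₀ := (0:ℝ)) (s := Set.Icc (-δ) δ)
    (bound := fun x => jacobiDensity θ α M N x * C)
    (F' := fun ε x => jacobiDensity θ α M N x * G' ε x)
    (Icc_mem_nhds (by linarith) hδ0)
    (by
      filter_upwards [Icc_mem_nhds (show -δ < 0 by linarith) hδ0] with ε hε
      exact hmeas.mul (hslice ε hε))
    (by
      refine Integrable.mul_bdd (c := C0) hintg (hslice 0 h0) ?_
      refine (ae_restrict_iff' (jCube_meas N)).2 (Filter.Eventually.of_forall fun x hx => ?_)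
      exact hC0 (0, x) ⟨h0, hx⟩)
    (hmeas.mul hslice')
    (by
      refine (ae_restrict_iff' (jCube_meas N)).2 (Filter.Eventually.of_forall fun x hx ε hε => ?_)
      rw [norm_mul, Real.norm_of_nonneg (jac_nonneg θ α M N hx)]
      exact mul_le_mul_of_nonneg_left (hC (ε, x) ⟨hε, hx⟩) (jac_nonneg θ α M N hx))
    (hintg.mul_const C)
    (by
      refine (ae_restrict_iff' (jCube_meas N)).2 (Filter.Eventually.of_forall fun x hx ε hε => ?_)
      exact (hG' ε hε x hx).const_mul _)
  have hconst : (fun ε => ∫ x in jCube N, jacobiDensity θ α M N x * G (ε, x)) =ᶠ[nhds 0]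
      fun _ => ∫ x in jCube N, jacobiDensity θ α M N x * F x := by
    filter_upwards [Icc_mem_nhds (show -δ < 0 by linarith) hδ0] with ε hε
    exact jac_change θ α M N n (hsm ε hε) F
  have hz := key.2.unique ((hasDerivAt_const (0:ℝ) _).congr_of_eventuallyEq hconst)
  rw [← hz]
  refine setIntegral_congr_fun (jCube_meas N) fun x hx => ?_
  congr 1
  have h1 := (jR_deriv θ A b N n x).fun_mul (hD x)
  have h2 := (hG' 0 h0 x hx).unique h1
  rw [h2, jR_zero]
  have : jPhi N n 0 x = x := by funext i; simp [jPhi, jphi]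
  rw [this]; ring

end JacLoop
section JacFunctional

/-- Power sums as continuous functions. -/
def jP (N k : ℕ) : C(Fin N → ℝ, ℝ) := ⟨fun x => ∑ i, x i ^ k, by fun_prop⟩

@[simp] lemma jP_apply (N k : ℕ) (x : Fin N → ℝ) : jP N k x = ∑ i, x i ^ k := rfl

/-- Expectation functionals satisfying the loop equations. -/
structure JLoop (θ α M : ℝ) (N : ℕ) (E : C(Fin N → ℝ, ℝ) →ₗ[ℝ] ℝ) : Prop where
  one : E 1 = 1
  nonneg : ∀ f : C(Fin N → ℝ, ℝ), (∀ x ∈ jCube N, 0 ≤ f x) → 0 ≤ E f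
  loop : ∀ (n l r : ℕ) (e : ℝ),
    θ * (∑ ab ∈ Finset.HasAntidiagonal.antidiagonal n,
          E ((jP N (l + 1) - ContinuousMap.const _ e) ^ r * (jP N ab.1 * jP N ab.2))
        - ∑ ab ∈ Finset.HasAntidiagonal.antidiagonal (n + 1),
          E ((jP N (l + 1) - ContinuousMap.const _ e) ^ r * (jP N ab.1 * jP N ab.2)))
      + (θ * α + (1 - θ) * (n + 1) - 1)
        * (E ((jP N (l + 1) - ContinuousMap.const _ e) ^ r * jP N n)
          - E ((jP N (l + 1) - ContinuousMap.const _ e) ^ r * jP N (n + 1)))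
      - θ * (M - N) * E ((jP N (l + 1) - ContinuousMap.const _ e) ^ r * jP N (n + 1))
      + r * ((l + 1 : ℕ) : ℝ) * E ((jP N (l + 1) - ContinuousMap.const _ e) ^ (r - 1)
          * (jP N (n + (l + 1)) - jP N (n + (l + 1) + 1))) = 0

lemma jq_comm (n : ℕ) (x y : ℝ) : jq n x y = jq n y x := by
  unfold jq
  congr 1
  · rw [← Finset.Nat.sum_antidiagonal_swap]
    exact Finset.sum_congr rfl fun ab _ => by simp [mul_comm]
  · rw [← Finset.Nat.sum_antidiagonal_swap]
    exact Finset.sum_congr rfl fun ab _ => by simp [mul_comm]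

lemma jac_sum_pairs (N : ℕ) (f : Fin N → Fin N → ℝ) (hf : ∀ i j, f i j = f j i) :
    2 * ∑ p ∈ Finset.univ.filter (fun p : Fin N × Fin N => p.1 < p.2), f p.1 p.2
      = ∑ i, ∑ j, f i j - ∑ i, f i i := by
  have h1 : ∑ i, ∑ j, f i j = ∑ p : Fin N × Fin N, f p.1 p.2 := by
    rw [Fintype.sum_prod_type]
  have h2 : ∑ p : Fin N × Fin N, f p.1 p.2
      = ∑ p ∈ Finset.univ.filter (fun p : Fin N × Fin N => p.1 < p.2), f p.1 p.2
      + ∑ p ∈ Finset.univ.filter (fun p : Fin N × Fin N => p.2 < p.1), f p.1 p.2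
      + ∑ p ∈ Finset.univ.filter (fun p : Fin N × Fin N => p.1 = p.2), f p.1 p.2 := by
    simp only [Finset.sum_filter]
    rw [← Finset.sum_add_distrib, ← Finset.sum_add_distrib]
    refine Finset.sum_congr rfl fun p _ => ?_
    rcases lt_trichotomy p.1 p.2 with h | h | h
    · simp [h, h.not_gt, h.ne]
    · simp [h]
    · simp [h, h.not_gt, h.ne']
  have h3 : ∑ p ∈ Finset.univ.filter (fun p : Fin N × Fin N => p.2 < p.1), f p.1 p.2
      = ∑ p ∈ Finset.univ.filter (fun p : Fin N × Fin N => p.1 < p.2), f p.1 p.2 := by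
    refine Finset.sum_bij' (fun p _ => p.swap) (fun p _ => p.swap) ?_ ?_ ?_ ?_ ?_
    · intro p hp; simpa using hp
    · intro p hp; simpa using hp
    · intro p _; simp
    · intro p _; simp
    · intro p _; simp [hf p.1 p.2]
  have h4 : ∑ p ∈ Finset.univ.filter (fun p : Fin N × Fin N => p.1 = p.2), f p.1 p.2
      = ∑ i, f i i := by
    rw [Finset.sum_filter, Fintype.sum_prod_type]
    refine Finset.sum_congr rfl fun i _ => ?_
    simp
  rw [h1, h2, h3, h4]; ring

lemma jac_antidiag_sum (N n : ℕ) (x : Fin N → ℝ) :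
    ∑ i, ∑ j, ∑ ab ∈ Finset.HasAntidiagonal.antidiagonal n, x i ^ ab.1 * x j ^ ab.2
      = ∑ ab ∈ Finset.HasAntidiagonal.antidiagonal n, (∑ i, x i ^ ab.1) * ∑ i, x i ^ ab.2 := by
  simp only [Finset.sum_mul_sum]
  rw [Finset.sum_comm (s := Finset.HasAntidiagonal.antidiagonal n) (t := Finset.univ)]
  refine Finset.sum_congr rfl fun i _ => ?_
  rw [Finset.sum_comm]

lemma jL_eq (θ α M : ℝ) (N n : ℕ) (x : Fin N → ℝ) :
    jL θ (θ * α - 1) (θ * (M - (N : ℝ)) + θ - 1) N n x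
    = θ * (∑ ab ∈ Finset.HasAntidiagonal.antidiagonal n, jP N ab.1 x * jP N ab.2 x
        - ∑ ab ∈ Finset.HasAntidiagonal.antidiagonal (n + 1), jP N ab.1 x * jP N ab.2 x)
      + (θ * α + (1 - θ) * (n + 1) - 1) * (jP N n x - jP N (n + 1) x)
      - θ * (M - N) * jP N (n + 1) x := by
  have h1 := jac_sum_pairs N (fun i j => jq n (x i) (x j)) fun i j => jq_comm n _ _
  have h2 : ∑ i, ∑ j, jq n (x i) (x j)
      = ∑ ab ∈ Finset.HasAntidiagonal.antidiagonal n, jP N ab.1 x * jP N ab.2 x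
        - ∑ ab ∈ Finset.HasAntidiagonal.antidiagonal (n + 1), jP N ab.1 x * jP N ab.2 x := by
    simp only [jq, Finset.sum_sub_distrib, jac_antidiag_sum, jP_apply]
  have h3 : ∑ i, jq n (x i) (x i) = (n + 1) * jP N n x - (n + 2) * jP N (n + 1) x := by
    simp only [jq_diag, Finset.sum_sub_distrib, ← Finset.mul_sum, jP_apply]
  have h4 : ∑ i, x i ^ n * (1 - x i) = jP N n x - jP N (n + 1) x := by
    simp only [jP_apply, ← Finset.sum_sub_distrib]
    exact Finset.sum_congr rfl fun i _ => by ring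
  unfold jL
  simp only [Finset.sum_add_distrib, ← Finset.mul_sum, h4, Finset.sum_neg_distrib, ← jP_apply N (n+1) x]
  rw [← h2]
  rw [h3] at h1 ⊢
  linear_combination θ * h1

theorem jac_exists_functional (θ α : ℝ) (M N : ℕ) (hθ : 0 < θ) (hα : 0 < α) (hM : N ≤ M) :
    ∃ E : C(Fin N → ℝ, ℝ) →ₗ[ℝ] ℝ, (∀ f : C(Fin N → ℝ, ℝ), E f = ∫ y, f y ∂ jacobiEnsemble θ α M N) ∧
      JLoop θ α M N E := by
  have hprob := jac_prob θ α M N hθ hα hM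
  have hintg := jac_cont_integrable θ α M N hθ hα hM
  let E : C(Fin N → ℝ, ℝ) →ₗ[ℝ] ℝ :=
    { toFun := fun f => ∫ y, f y ∂ jacobiEnsemble θ α M N
      map_add' := fun f g => integral_add (hintg f) (hintg g)
      map_smul' := fun c f => integral_const_mul c f }
  have hE : ∀ f : C(Fin N → ℝ, ℝ), E f = ∫ y, f y ∂ jacobiEnsemble θ α M N := fun f => rfl
  refine ⟨E, hE, ?_, ?_, ?_⟩
  · rw [hE]; simp
  · intro f hf
    rw [hE]
    refine integral_nonneg_of_ae ?_
    filter_upwards [jac_ae θ α M N] with y hy using hf y hy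
  · intro n l r e
    set t := jP N (l + 1) - ContinuousMap.const _ e with ht
    have hF : ContDiff ℝ 1 (fun x : Fin N → ℝ => (∑ i, x i ^ (l + 1) - e) ^ r) := by fun_prop
    have key := jac_loop_raw θ α M N n hθ hα hM (fun x => (∑ i, x i ^ (l + 1) - e) ^ r)
      (fun x => r * (∑ i, x i ^ (l + 1) - e) ^ (r - 1)
        * (((l + 1 : ℕ) : ℝ) * (jP N (n + (l + 1)) x - jP N (n + (l + 1) + 1) x))) hF (by
      intro x
      have h1 : ∀ i : Fin N, HasDerivAt (fun ε => jPhi N n ε x i) (x i ^ (n + 1) * (1 - x i)) 0 := by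
        intro i
        simpa [jPhi, jphi] using
          ((hasDerivAt_id (0:ℝ)).mul_const (x i ^ (n + 1) * (1 - x i))).const_add (x i)
      have h2 := ((HasDerivAt.fun_sum (u := Finset.univ)
        fun i _ => (h1 i).fun_pow (l + 1)).sub_const e).fun_pow r
      refine h2.congr_deriv ?_
      have h0 : jPhi N n 0 x = x := by funext i; simp [jPhi, jphi]
      simp only [h0]
      congr 1
      simp only [jP_apply, ← Finset.sum_sub_distrib]
      rw [Finset.mul_sum]
      refine Finset.sum_congr rfl fun i _ => ?_
      rw [Nat.add_sub_cancel]; ring)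
    simp only [jL_eq] at key
    set W : C(Fin N → ℝ, ℝ) :=
      θ • (∑ ab ∈ Finset.HasAntidiagonal.antidiagonal n, t ^ r * (jP N ab.1 * jP N ab.2)
        - ∑ ab ∈ Finset.HasAntidiagonal.antidiagonal (n + 1), t ^ r * (jP N ab.1 * jP N ab.2))
      + (θ * α + (1 - θ) * (n + 1) - 1) • (t ^ r * jP N n - t ^ r * jP N (n + 1))
      - (θ * (M - N)) • (t ^ r * jP N (n + 1))
      + (r * ((l + 1 : ℕ) : ℝ)) • (t ^ (r - 1) * (jP N (n + (l + 1)) - jP N (n + (l + 1) + 1))) with hW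
    have hEW : E W = 0 := by
      rw [hE, jac_integral]
      refine mul_eq_zero_of_right _ ?_
      rw [← key]
      refine setIntegral_congr_fun (jCube_meas N) fun x hx => ?_
      simp only [hW, ht]
      congr 1
      simp only [ContinuousMap.add_apply, ContinuousMap.sub_apply, ContinuousMap.smul_apply,
        ContinuousMap.mul_apply, ContinuousMap.pow_apply, ContinuousMap.const_apply,
        ContinuousMap.sum_apply, smul_eq_mul, ← Finset.mul_sum, jP_apply]
      ring
    rw [hW] at hEW
    simp only [map_add, map_sub, map_smul, map_sum, smul_eq_mul] at hEW
    rw [← hEW]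

end JacFunctional
/-! Part: moment bounds from loop equations -/
section JacMoments
open Filter Topology

namespace JLoop
variable {θ α M : ℝ} {N : ℕ} {E : C(Fin N → ℝ, ℝ) →ₗ[ℝ] ℝ}

lemma E_const (h : JLoop θ α M N E) (c : ℝ) : E (ContinuousMap.const _ c) = c := by
  have : (ContinuousMap.const (Fin N → ℝ) c) = c • (1 : C(Fin N → ℝ, ℝ)) := by ext; simp
  rw [this, map_smul, h.one]; simp

lemma E_const_mul (_h : JLoop θ α M N E) (c : ℝ) (f : C(Fin N → ℝ, ℝ)) :
    E (ContinuousMap.const _ c * f) = c * E f := by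
  have : (ContinuousMap.const (Fin N → ℝ) c) * f = c • f := by ext; simp
  rw [this, map_smul]; simp

lemma mono (h : JLoop θ α M N E) (f g : C(Fin N → ℝ, ℝ)) (hfg : ∀ x ∈ jCube N, f x ≤ g x) :
    E f ≤ E g := by
  have := h.nonneg (g - f) fun x hx => by simpa using hfg x hx
  rw [map_sub] at this; linarith

lemma sq_le (h : JLoop θ α M N E) (f : C(Fin N → ℝ, ℝ)) : (E f) ^ 2 ≤ E (f ^ 2) := by
  have h1 := h.nonneg ((f - ContinuousMap.const _ (E f)) ^ 2) fun x _ => by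
    simp only [ContinuousMap.pow_apply]; positivity
  have h2 : (f - ContinuousMap.const _ (E f)) ^ 2
      = f ^ 2 - ContinuousMap.const _ (2 * E f) * f + ContinuousMap.const _ (E f ^ 2) := by
    ext x; simp; ring
  rw [h2, map_add, map_sub, h.E_const_mul, h.E_const] at h1
  nlinarith

lemma four_le (h : JLoop θ α M N E) (f : C(Fin N → ℝ, ℝ)) : (E f) ^ 4 ≤ E (f ^ 4) := by
  have h1 := h.sq_le f
  have h2 := h.sq_le (f ^ 2)
  rw [← pow_mul] at h2
  norm_num at h2
  nlinarith [sq_nonneg (E f), pow_le_pow_left₀ (sq_nonneg (E f)) h1 2]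

lemma four_center (h : JLoop θ α M N E) (f : C(Fin N → ℝ, ℝ)) (c : ℝ) :
    E ((f - ContinuousMap.const _ (E f)) ^ 4) ≤ 16 * E ((f - ContinuousMap.const _ c) ^ 4) := by
  set g := f - ContinuousMap.const _ c with hg
  have hEg : E g = E f - c := by rw [hg, map_sub, h.E_const]
  have h1 := h.four_le g
  have h2 := h.mono ((f - ContinuousMap.const _ (E f)) ^ 4)
    (ContinuousMap.const _ 8 * g ^ 4 + ContinuousMap.const _ (8 * (E g) ^ 4)) fun x _ => by
      have e : f x = g x + c := by simp [hg]
      simp only [ContinuousMap.pow_apply, ContinuousMap.sub_apply, ContinuousMap.const_apply,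
        ContinuousMap.add_apply, ContinuousMap.mul_apply]
      rw [e, show g x + c - E f = g x - E g by rw [hEg]; ring]
      nlinarith [sq_nonneg (g x + E g), sq_nonneg (g x - E g), sq_nonneg (g x ^ 2 - (E g) ^ 2),
        sq_nonneg (g x * E g), sq_nonneg ((g x + E g) ^ 2), sq_nonneg (g x ^ 2 + E g ^ 2 + 2 * g x * E g),
        mul_nonneg (sq_nonneg (g x)) (sq_nonneg (g x + E g)), mul_nonneg (sq_nonneg (E g)) (sq_nonneg (g x + E g))]
  rw [map_add, h.E_const_mul, h.E_const] at h2
  linarith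

end JLoop

lemma jP_zero (N : ℕ) : jP N 0 = ContinuousMap.const _ (N : ℝ) := by ext; simp

lemma jP_bound (N k : ℕ) {x : Fin N → ℝ} (hx : x ∈ jCube N) : 0 ≤ jP N k x ∧ jP N k x ≤ N := by
  rw [mem_jCube] at hx
  rw [jP_apply]
  constructor
  · exact Finset.sum_nonneg fun i _ => pow_nonneg (hx i).1 _
  · calc ∑ i, x i ^ k ≤ ∑ i : Fin N, (1 : ℝ) :=
        Finset.sum_le_sum fun i _ => pow_le_one₀ (hx i).1 (hx i).2
      _ = N := by simp

lemma jP_anti (N k : ℕ) {x : Fin N → ℝ} (hx : x ∈ jCube N) : jP N (k + 1) x ≤ jP N k x := by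
  rw [mem_jCube] at hx
  rw [jP_apply, jP_apply]
  exact Finset.sum_le_sum fun i _ => pow_le_pow_of_le_one (hx i).1 (hx i).2 (Nat.le_succ k)

/-- Interior part of the antidiagonal. -/
def jmid (n : ℕ) : Finset (ℕ × ℕ) :=
  (Finset.HasAntidiagonal.antidiagonal (n + 1)).filter fun ab => ab.1 ≤ n ∧ ab.2 ≤ n

lemma jmid_sum {R : Type*} [AddCommMonoid R] (n : ℕ) (f : ℕ → ℕ → R) :
    ∑ ab ∈ Finset.HasAntidiagonal.antidiagonal (n + 1), f ab.1 ab.2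
      = f 0 (n + 1) + f (n + 1) 0 + ∑ ab ∈ jmid n, f ab.1 ab.2 := by
  unfold jmid
  rw [← Finset.sum_filter_not_add_sum_filter (Finset.HasAntidiagonal.antidiagonal (n + 1))
    (fun ab => ab.1 ≤ n ∧ ab.2 ≤ n)]
  congr 1
  have : (Finset.HasAntidiagonal.antidiagonal (n + 1)).filter (fun ab => ¬ (ab.1 ≤ n ∧ ab.2 ≤ n))
      = {(0, n + 1), (n + 1, 0)} := by
    ext ⟨a, b⟩
    simp only [Finset.mem_filter, Finset.HasAntidiagonal.mem_antidiagonal, Finset.mem_insert,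
      Finset.mem_singleton, Prod.mk.injEq]
    omega
  rw [this, Finset.sum_pair (by simp)]

lemma mem_jmid {n : ℕ} {ab : ℕ × ℕ} (h : ab ∈ jmid n) : ab.1 ≤ n ∧ ab.2 ≤ n := by
  unfold jmid at h
  exact (Finset.mem_filter.1 h).2

lemma mem_jad {n : ℕ} {ab : ℕ × ℕ} (h : ab ∈ Finset.HasAntidiagonal.antidiagonal n) :
    ab.1 ≤ n ∧ ab.2 ≤ n := by
  rw [Finset.HasAntidiagonal.mem_antidiagonal] at h
  omega

/-- Coefficient. -/
noncomputable def ju (θ α : ℝ) (n : ℕ) : ℝ := θ * α + (1 - θ) * (n + 1) - 1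

/-- Lower order part of the loop operator. -/
noncomputable def jT (θ α : ℝ) (N n : ℕ) : C(Fin N → ℝ, ℝ) :=
  θ • (∑ ab ∈ Finset.HasAntidiagonal.antidiagonal n, jP N ab.1 * jP N ab.2
    - ∑ ab ∈ jmid n, jP N ab.1 * jP N ab.2) + ju θ α n • jP N n

/-- Leading coefficient. -/
noncomputable def jB (θ α M : ℝ) (N n : ℕ) : ℝ := 2 * θ * N + ju θ α n + θ * (M - N)

lemma JLoop.loopT {θ α M : ℝ} {N : ℕ} {E : C(Fin N → ℝ, ℝ) →ₗ[ℝ] ℝ} (h : JLoop θ α M N E)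
    (n l r : ℕ) (e : ℝ) :
    E ((jP N (l + 1) - ContinuousMap.const _ e) ^ r * jT θ α N n)
      - jB θ α M N n * E ((jP N (l + 1) - ContinuousMap.const _ e) ^ r * jP N (n + 1))
      + r * ((l + 1 : ℕ) : ℝ) * E ((jP N (l + 1) - ContinuousMap.const _ e) ^ (r - 1)
          * (jP N (n + (l + 1)) - jP N (n + (l + 1) + 1))) = 0 := by
  have h1 := h.loop n l r e
  set g := (jP N (l + 1) - ContinuousMap.const _ e) ^ r
  rw [jmid_sum n (fun a b => E (g * (jP N a * jP N b)))] at h1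
  have e1 : g * (jP N 0 * jP N (n + 1)) = ContinuousMap.const _ (N : ℝ) * (g * jP N (n + 1)) := by
    rw [jP_zero]; ring
  have e2 : g * (jP N (n + 1) * jP N 0) = ContinuousMap.const _ (N : ℝ) * (g * jP N (n + 1)) := by
    rw [jP_zero]; ring
  rw [e1, e2, h.E_const_mul] at h1
  have e3 : E (g * jT θ α N n) = θ * (∑ ab ∈ Finset.HasAntidiagonal.antidiagonal n, E (g * (jP N ab.1 * jP N ab.2))
      - ∑ ab ∈ jmid n, E (g * (jP N ab.1 * jP N ab.2))) + ju θ α n * E (g * jP N n) := by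
    unfold jT
    simp only [mul_add, mul_smul_comm, mul_sub, Finset.mul_sum, map_add, map_smul, map_sub, map_sum,
      smul_eq_mul]
  rw [e3]
  unfold jB
  unfold ju
  linear_combination h1

lemma jac_young (η a b : ℝ) (hη : 0 < η) : a ^ 3 * b ≤ η * a ^ 4 + 1 / η ^ 3 * b ^ 4 := by
  obtain ⟨c, rfl⟩ : ∃ c, b = η * c := ⟨b / η, by field_simp⟩
  have : 1 / η ^ 3 * (η * c) ^ 4 = η * c ^ 4 := by field_simp
  rw [this]
  have h1 : a ^ 3 * c ≤ a ^ 4 + c ^ 4 := by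
    nlinarith [mul_nonneg (sq_nonneg a) (sq_nonneg (a - c)), sq_nonneg (a ^ 2 - c ^ 2), sq_nonneg (a^2), sq_nonneg (c^2)]
  nlinarith

lemma JLoop.four_step {θ α M : ℝ} {N : ℕ} {E : C(Fin N → ℝ, ℝ) →ₗ[ℝ] ℝ} (h : JLoop θ α M N E)
    (hθ : 0 < θ) (hN : 1 ≤ N) (n : ℕ) (C : ℝ) (hB : θ * N ≤ jB θ α M N n)
    (hT : E ((jT θ α N n - ContinuousMap.const _ (E (jT θ α N n))) ^ 4) ≤ C * (N : ℝ) ^ 4) :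
    E ((jP N (n + 1) - ContinuousMap.const _ (E (jP N (n + 1)))) ^ 4)
      ≤ 2 / θ * (64 * C / θ ^ 3 + 9 * ((n : ℝ) + 1) ^ 2 / θ) := by
  have hN0 : (0 : ℝ) < N := by exact_mod_cast hN
  set B := jB θ α M N n
  set T := jT θ α N n
  set p := jP N (n + 1) with hp
  set e := E p with he
  set t := p - ContinuousMap.const _ e with ht
  set X := T - ContinuousMap.const _ (E T) with hX
  have h0 : E T = B * e := by
    have := h.loopT n n 0 e
    simp only [pow_zero, one_mul, Nat.cast_zero, zero_mul, add_zero] at this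
    linarith
  have h3 := h.loopT n n 3 e
  rw [← hp, ← ht] at h3
  norm_num at h3
  have e1 : t ^ 3 * T - ContinuousMap.const _ B * (t ^ 3 * p)
      = t ^ 3 * X - ContinuousMap.const _ B * t ^ 4 := by
    ext x
    simp only [hX, ht, h0, ContinuousMap.sub_apply, ContinuousMap.mul_apply, ContinuousMap.pow_apply,
      ContinuousMap.const_apply]
    ring
  have e2 := congrArg E e1
  rw [map_sub, map_sub, h.E_const_mul, h.E_const_mul] at e2
  set D := jP N (n + (n + 1)) - jP N (n + (n + 1) + 1) with hD
  have hDb : ∀ x ∈ jCube N, 0 ≤ D x ∧ D x ≤ N := by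
    intro x hx
    have a1 := jP_anti N (n + (n + 1)) hx
    have a2 := jP_bound N (n + (n + 1)) hx
    have a3 := jP_bound N (n + (n + 1) + 1) hx
    rw [hD, ContinuousMap.sub_apply]
    constructor <;> linarith
  have b1 := h.mono (t ^ 3 * X) (ContinuousMap.const _ (θ * N / 4) * t ^ 4
      + ContinuousMap.const _ (1 / (θ * N / 4) ^ 3) * X ^ 4) fun x _ => by
    simpa using jac_young (θ * N / 4) (t x) (X x) (by positivity)
  rw [map_add, h.E_const_mul, h.E_const_mul] at b1
  have b2 := h.mono (ContinuousMap.const _ (3 * ((n : ℝ) + 1)) * (t ^ 2 * D))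
      (ContinuousMap.const _ (θ * N / 4) * t ^ 4
      + ContinuousMap.const _ (N * (9 * ((n : ℝ) + 1) ^ 2 / θ))) fun x hx => by
    simp only [ContinuousMap.pow_apply, ContinuousMap.const_apply,
        ContinuousMap.add_apply, ContinuousMap.mul_apply]
    have hd := (hDb x hx).2
    have s1 : 3 * ((n : ℝ) + 1) * (t x ^ 2 * D x) ≤ N * (3 * ((n : ℝ) + 1) * t x ^ 2) := by
      have : 0 ≤ 3 * ((n : ℝ) + 1) * t x ^ 2 := by positivity
      nlinarith
    have s2 : 3 * ((n : ℝ) + 1) * t x ^ 2 ≤ θ / 4 * t x ^ 4 + 9 * ((n : ℝ) + 1) ^ 2 / θ := by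
      have s3 : 0 ≤ θ * (t x ^ 2 / 2 - 3 * ((n : ℝ) + 1) / θ) ^ 2 := by positivity
      have s4 : θ * (t x ^ 2 / 2 - 3 * ((n : ℝ) + 1) / θ) ^ 2
        = θ / 4 * t x ^ 4 + 9 * ((n : ℝ) + 1) ^ 2 / θ - 3 * ((n : ℝ) + 1) * t x ^ 2 := by
        field_simp; ring
      linarith
    calc _ ≤ _ := s1
      _ ≤ N * (θ / 4 * t x ^ 4 + 9 * ((n : ℝ) + 1) ^ 2 / θ) := by gcongr
      _ = _ := by ring
  rw [map_add, h.E_const_mul, h.E_const_mul, h.E_const] at b2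
  have b3 : 1 / (θ * N / 4) ^ 3 * E (X ^ 4) ≤ N * (64 * C / θ ^ 3) := by
    calc _ ≤ 1 / (θ * N / 4) ^ 3 * (C * (N : ℝ) ^ 4) := by gcongr
      _ = _ := by field_simp; ring
  have ht4 : 0 ≤ E (t ^ 4) := h.nonneg _ fun x _ => by
    simp only [ContinuousMap.pow_apply]; positivity
  have b4 : θ * N * E (t ^ 4) ≤ B * E (t ^ 4) := by gcongr
  have b5 : N * (θ / 2 * E (t ^ 4)) ≤ N * (64 * C / θ ^ 3 + 9 * ((n : ℝ) + 1) ^ 2 / θ) := by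
    linarith
  have b6 := le_of_mul_le_mul_left b5 hN0
  calc E (t ^ 4) = 2 / θ * (θ / 2 * E (t ^ 4)) := by field_simp
    _ ≤ _ := by gcongr

end JacMoments
section JacFamily
open Filter Topology

/-- A family of functionals in the asymptotic regime. -/
structure JFam (θ : ℝ) (α M : ℕ → ℝ) (E : ∀ N, C(Fin N → ℝ, ℝ) →ₗ[ℝ] ℝ) (a Mh : ℝ) : Prop where
  hθ : 0 < θ
  loop : ∀ N, 1 ≤ N → JLoop θ (α N) (M N) N (E N)
  αpos : ∀ N, 1 ≤ N → 0 < α N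
  MN : ∀ N : ℕ, 1 ≤ N → (N : ℝ) ≤ M N
  limα : Tendsto (fun N : ℕ => α N / (N : ℝ)) atTop (𝓝 a)
  limM : Tendsto (fun N : ℕ => M N / (N : ℝ)) atTop (𝓝 Mh)

/-- Bounded centered fourth moment at scale `N^d`. -/
def JGood (E : ∀ N, C(Fin N → ℝ, ℝ) →ₗ[ℝ] ℝ) (f : ∀ N, C(Fin N → ℝ, ℝ)) (d : ℕ) : Prop :=
  ∃ C : ℝ, 0 ≤ C ∧ ∀ᶠ N : ℕ in atTop,
    E N ((f N - ContinuousMap.const _ (E N (f N))) ^ 4) ≤ C * ((N : ℝ) ^ d) ^ 4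

variable {θ : ℝ} {α M : ℕ → ℝ} {E : ∀ N, C(Fin N → ℝ, ℝ) →ₗ[ℝ] ℝ} {a Mh : ℝ}

lemma jac_four_add (x y : ℝ) : (x + y) ^ 4 ≤ 8 * x ^ 4 + 8 * y ^ 4 := by
  have h1 : (x + y) ^ 2 ≤ 2 * x ^ 2 + 2 * y ^ 2 := by nlinarith [sq_nonneg (x - y)]
  have h2 : ((x + y) ^ 2) ^ 2 ≤ (2 * x ^ 2 + 2 * y ^ 2) ^ 2 :=
    pow_le_pow_left₀ (sq_nonneg _) h1 2
  nlinarith [sq_nonneg (x ^ 2 - y ^ 2)]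

lemma JFam.good_add (H : JFam θ α M E a Mh) {f g : ∀ N, C(Fin N → ℝ, ℝ)} {d : ℕ}
    (hf : JGood E f d) (hg : JGood E g d) : JGood E (fun N => f N + g N) d := by
  obtain ⟨C, hC, hf⟩ := hf
  obtain ⟨C', hC', hg⟩ := hg
  refine ⟨8 * C + 8 * C', by positivity, ?_⟩
  filter_upwards [hf, hg, eventually_ge_atTop 1] with N h1 h2 hN
  have h := H.loop N hN
  have h3 := h.mono ((f N + g N - ContinuousMap.const _ (E N (f N + g N))) ^ 4)
    (ContinuousMap.const _ 8 * (f N - ContinuousMap.const _ (E N (f N))) ^ 4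
      + ContinuousMap.const _ 8 * (g N - ContinuousMap.const _ (E N (g N))) ^ 4) fun x _ => by
    simp only [ContinuousMap.pow_apply, ContinuousMap.const_apply, ContinuousMap.sub_apply,
        ContinuousMap.add_apply, ContinuousMap.mul_apply, map_add]
    have := jac_four_add (f N x - E N (f N)) (g N x - E N (g N))
    calc _ = (f N x - E N (f N) + (g N x - E N (g N))) ^ 4 := by ring
      _ ≤ _ := this
  rw [map_add (E N) (ContinuousMap.const _ 8 * _), h.E_const_mul, h.E_const_mul] at h3
  linarith

lemma JFam.good_smul (H : JFam θ α M E a Mh) {f : ∀ N, C(Fin N → ℝ, ℝ)} {d d' : ℕ} (c : ℕ → ℝ)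
    (K : ℝ) (hc : ∀ᶠ N : ℕ in atTop, |c N| ≤ K * (N : ℝ) ^ d')
    (hf : JGood E f d) : JGood E (fun N => c N • f N) (d' + d) := by
  obtain ⟨C, hC, hf⟩ := hf
  refine ⟨K ^ 4 * C, by positivity, ?_⟩
  filter_upwards [hf, hc, eventually_ge_atTop 1] with N h1 h2 hN
  have h := H.loop N hN
  have e : (c N • f N - ContinuousMap.const _ (E N (c N • f N))) ^ 4
      = ContinuousMap.const _ (c N ^ 4) * (f N - ContinuousMap.const _ (E N (f N))) ^ 4 := by
    ext x
    simp only [ContinuousMap.pow_apply, ContinuousMap.const_apply, ContinuousMap.sub_apply,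
      ContinuousMap.mul_apply, map_smul, ContinuousMap.smul_apply, smul_eq_mul]
    ring
  rw [e, h.E_const_mul]
  have h4 : c N ^ 4 ≤ (K * (N : ℝ) ^ d') ^ 4 := by
    rw [← Even.pow_abs (by decide : Even 4)]
    exact pow_le_pow_left₀ (abs_nonneg _) h2 4
  have h5 : 0 ≤ E N ((f N - ContinuousMap.const _ (E N (f N))) ^ 4) := h.nonneg _ fun x _ => by
    simp only [ContinuousMap.pow_apply]; positivity
  calc _ ≤ (K * (N : ℝ) ^ d') ^ 4 * (C * ((N : ℝ) ^ d) ^ 4) := by gcongr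
    _ = _ := by rw [pow_add]; ring

lemma JFam.good_sum (H : JFam θ α M E a Mh) {ι : Type*} (s : Finset ι)
    (f : ι → ∀ N, C(Fin N → ℝ, ℝ)) {d : ℕ}
    (hf : ∀ i ∈ s, JGood E (f i) d) : JGood E (fun N => ∑ i ∈ s, f i N) d := by
  classical
  induction s using Finset.induction_on with
  | empty =>
    refine ⟨0, le_rfl, Eventually.of_forall fun N => ?_⟩
    have : (∑ i ∈ (∅ : Finset ι), f i N - ContinuousMap.const _ (E N (∑ i ∈ (∅ : Finset ι), f i N))) ^ 4 = 0 := by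
      ext; simp
    rw [this]; simp
  | insert i s hi ih =>
    have := H.good_add (hf i (Finset.mem_insert_self i s))
      (ih fun j hj => hf j (Finset.mem_insert_of_mem hj))
    simpa only [Finset.sum_insert hi] using this

lemma JFam.e_bound (H : JFam θ α M E a Mh) (N : ℕ) (hN : 1 ≤ N) (k : ℕ) :
    0 ≤ E N (jP N k) ∧ E N (jP N k) ≤ N := by
  have h := H.loop N hN
  refine ⟨h.nonneg _ fun x hx => (jP_bound N k hx).1, ?_⟩
  have := h.mono (jP N k) (ContinuousMap.const _ (N : ℝ)) fun x hx => (jP_bound N k hx).2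
  rwa [h.E_const] at this

lemma JFam.good_mul (H : JFam θ α M E a Mh) {k l : ℕ}
    (hf : JGood E (fun N => jP N k) 0) (hg : JGood E (fun N => jP N l) 0) :
    JGood E (fun N => jP N k * jP N l) 1 := by
  obtain ⟨C, hC, hf⟩ := hf
  obtain ⟨C', hC', hg⟩ := hg
  refine ⟨16 * (8 * C + 8 * C'), by positivity, ?_⟩
  filter_upwards [hf, hg, eventually_ge_atTop 1] with N h1 h2 hN
  have h := H.loop N hN
  refine (h.four_center _ (E N (jP N k) * E N (jP N l))).trans ?_
  have h3 := h.mono ((jP N k * jP N l - ContinuousMap.const _ (E N (jP N k) * E N (jP N l))) ^ 4)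
    (ContinuousMap.const _ (8 * (N : ℝ) ^ 4) * (jP N k - ContinuousMap.const _ (E N (jP N k))) ^ 4
      + ContinuousMap.const _ (8 * (N : ℝ) ^ 4) * (jP N l - ContinuousMap.const _ (E N (jP N l))) ^ 4)
      fun x hx => by
    simp only [ContinuousMap.pow_apply, ContinuousMap.const_apply, ContinuousMap.sub_apply,
        ContinuousMap.add_apply, ContinuousMap.mul_apply]
    obtain ⟨b1, b2⟩ := H.e_bound N hN l
    obtain ⟨b3, b4⟩ := jP_bound N k hx
    have := jac_four_add ((jP N k x - E N (jP N k)) * E N (jP N l)) (jP N k x * (jP N l x - E N (jP N l)))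
    have c1 : (E N (jP N l)) ^ 4 ≤ (N : ℝ) ^ 4 := pow_le_pow_left₀ b1 b2 4
    have c2 : (jP N k x) ^ 4 ≤ (N : ℝ) ^ 4 := pow_le_pow_left₀ b3 b4 4
    have c3 : 0 ≤ (jP N k x - E N (jP N k)) ^ 4 := by positivity
    have c4 : 0 ≤ (jP N l x - E N (jP N l)) ^ 4 := by positivity
    calc _ = ((jP N k x - E N (jP N k)) * E N (jP N l) + jP N k x * (jP N l x - E N (jP N l))) ^ 4 := by ring
      _ ≤ _ := this
      _ = 8 * (E N (jP N l)) ^ 4 * (jP N k x - E N (jP N k)) ^ 4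
          + 8 * (jP N k x) ^ 4 * (jP N l x - E N (jP N l)) ^ 4 := by ring
      _ ≤ _ := by gcongr
  rw [map_add, h.E_const_mul, h.E_const_mul] at h3
  have h4 : 8 * (N : ℝ) ^ 4 * E N ((jP N k - ContinuousMap.const _ (E N (jP N k))) ^ 4)
      ≤ 8 * (N : ℝ) ^ 4 * (C * ((N : ℝ) ^ 0) ^ 4) := by gcongr
  have h5 : 8 * (N : ℝ) ^ 4 * E N ((jP N l - ContinuousMap.const _ (E N (jP N l))) ^ 4)
      ≤ 8 * (N : ℝ) ^ 4 * (C' * ((N : ℝ) ^ 0) ^ 4) := by gcongr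
  simp only [pow_zero, one_pow, mul_one, pow_one] at h4 h5 ⊢
  linarith

lemma JFam.lim_u (H : JFam θ α M E a Mh) (n : ℕ) :
    Tendsto (fun N : ℕ => ju θ (α N) n / N) atTop (𝓝 (θ * a)) := by
  have h1 := (H.limα.const_mul θ).add (tendsto_const_div_atTop_nhds_zero_nat ((1 - θ) * (n + 1) - 1))
  rw [add_zero] at h1
  refine h1.congr fun N => ?_
  unfold ju
  ring

lemma JFam.lim_B (H : JFam θ α M E a Mh) (n : ℕ) :
    Tendsto (fun N : ℕ => jB θ (α N) (M N) N n / N) atTop (𝓝 (θ * (1 + a + Mh))) := by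
  have h1 := (H.lim_u n).add ((H.limM.const_mul θ).add_const θ)
  have e : θ * a + (θ * Mh + θ) = θ * (1 + a + Mh) := by ring
  rw [e] at h1
  refine h1.congr' ?_
  filter_upwards [eventually_ge_atTop 1] with N hN
  have : (N : ℝ) ≠ 0 := by positivity
  unfold jB
  field_simp
  ring

lemma JFam.a_nonneg (H : JFam θ α M E a Mh) : 0 ≤ a := by
  refine ge_of_tendsto H.limα ?_
  filter_upwards [eventually_ge_atTop 1] with N hN
  have := H.αpos N hN
  positivity

lemma JFam.Mh_ge (H : JFam θ α M E a Mh) : 1 ≤ Mh := by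
  refine ge_of_tendsto H.limM ?_
  filter_upwards [eventually_ge_atTop 1] with N hN
  have h1 := H.MN N hN
  rw [le_div_iff₀ (by positivity)]; linarith

lemma JFam.good_P (H : JFam θ α M E a Mh) (k : ℕ) : JGood E (fun N => jP N k) 0 := by
  induction k using Nat.strong_induction_on with
  | _ k ih =>
  cases k with
  | zero =>
    refine ⟨0, le_rfl, ?_⟩
    filter_upwards [eventually_ge_atTop 1] with N hN
    have : (jP N 0 - ContinuousMap.const _ (E N (jP N 0))) ^ 4 = 0 := by
      rw [jP_zero, (H.loop N hN).E_const]; simp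
    rw [this]; simp
  | succ n =>
    have hu : ∀ᶠ N : ℕ in atTop, |ju θ (α N) n| ≤ (|θ * a| + 1) * (N : ℝ) ^ 1 := by
      have := ((H.lim_u n).abs).eventually_le_const (show |θ * a| < |θ * a| + 1 by linarith)
      filter_upwards [this, eventually_ge_atTop 1] with N h1 hN
      rw [abs_div, Nat.abs_cast, div_le_iff₀ (by positivity)] at h1
      simpa using h1
    have hT : JGood E (fun N => jT θ (α N) N n) 1 := by
      unfold jT
      refine H.good_add ?_ (H.good_smul (d' := 1) (d := 0) _ _ hu (ih n (by omega)))
      have g1 := H.good_sum (Finset.HasAntidiagonal.antidiagonal n)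
        (fun ab N => jP N ab.1 * jP N ab.2) (d := 1) fun ab hab =>
          H.good_mul (ih _ (by have := mem_jad hab; omega)) (ih _ (by have := mem_jad hab; omega))
      have g2 := H.good_sum (jmid n)
        (fun ab N => jP N ab.1 * jP N ab.2) (d := 1) fun ab hab =>
          H.good_mul (ih _ (by have := mem_jmid hab; omega)) (ih _ (by have := mem_jmid hab; omega))
      have g3 := H.good_smul (d' := 0) (fun _ => (-1 : ℝ)) 1 (Eventually.of_forall fun N => by simp) g2
      rw [zero_add] at g3
      have g4 := H.good_smul (d' := 0) (fun _ => θ) |θ| (Eventually.of_forall fun N => by simp)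
        (H.good_add g1 g3)
      rw [zero_add] at g4
      simpa [sub_eq_add_neg] using g4
    obtain ⟨C, hC, hT⟩ := hT
    have hθ := H.hθ
    refine ⟨2 / θ * (64 * C / θ ^ 3 + 9 * ((n : ℝ) + 1) ^ 2 / θ), by positivity, ?_⟩
    have hB := (H.lim_B n).eventually_const_le (show θ < θ * (1 + a + Mh) by
      nlinarith [H.a_nonneg, H.Mh_ge])
    filter_upwards [hT, hB, eventually_ge_atTop 1] with N h1 h2 hN
    rw [le_div_iff₀ (by positivity)] at h2
    have := (H.loop N hN).four_step H.hθ hN n C h2 (by simpa using h1)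
    simpa using this

end JacFamily
section JacLimits
open Filter Topology

variable {θ : ℝ} {α M : ℕ → ℝ} {E : ∀ N, C(Fin N → ℝ, ℝ) →ₗ[ℝ] ℝ} {a Mh : ℝ}

/-- Centered power sums. -/
def jt (E : ∀ N, C(Fin N → ℝ, ℝ) →ₗ[ℝ] ℝ) (N k : ℕ) : C(Fin N → ℝ, ℝ) :=
  jP N k - ContinuousMap.const _ (E N (jP N k))

lemma JLoop.abs_le {θ α M : ℝ} {N : ℕ} {E : C(Fin N → ℝ, ℝ) →ₗ[ℝ] ℝ} (h : JLoop θ α M N E)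
    (f g : C(Fin N → ℝ, ℝ)) (hfg : ∀ x ∈ jCube N, |f x| ≤ g x) : |E f| ≤ E g := by
  rw [_root_.abs_le]
  constructor
  · have := h.mono (-g) f fun x hx => by
      rw [ContinuousMap.neg_apply]; exact (_root_.abs_le.1 (hfg x hx)).1
    rwa [map_neg] at this
  · exact h.mono f g fun x hx => (_root_.abs_le.1 (hfg x hx)).2

lemma JFam.bound3 (H : JFam θ α M E a Mh) (i j k : ℕ) :
    ∃ C : ℝ, ∀ᶠ N : ℕ in atTop, |E N (jt E N i * (jt E N j * jt E N k))| ≤ C := by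
  obtain ⟨C1, _, h1⟩ := H.good_P i
  obtain ⟨C2, _, h2⟩ := H.good_P j
  obtain ⟨C3, _, h3⟩ := H.good_P k
  refine ⟨1 + C1 + C2 + C3, ?_⟩
  filter_upwards [h1, h2, h3, eventually_ge_atTop 1] with N h1 h2 h3 hN
  have h := H.loop N hN
  have := h.abs_le (jt E N i * (jt E N j * jt E N k))
    (ContinuousMap.const _ 1 + jt E N i ^ 4 + jt E N j ^ 4 + jt E N k ^ 4) fun x _ => by
    simp only [ContinuousMap.pow_apply, ContinuousMap.const_apply,
        ContinuousMap.add_apply, ContinuousMap.mul_apply]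
    set x1 := jt E N i x
    set x2 := jt E N j x
    set x3 := jt E N k x
    have b1 : x2 ^ 2 * x3 ^ 2 ≤ x2 ^ 4 + x3 ^ 4 := by nlinarith [sq_nonneg (x2 ^ 2 - x3 ^ 2), sq_nonneg (x2^2), sq_nonneg (x3^2)]
    have b2 : x1 ^ 2 ≤ 1 + x1 ^ 4 := by nlinarith [sq_nonneg (x1 ^ 2 - 1)]
    rw [_root_.abs_le]
    constructor
    · nlinarith [sq_nonneg (x1 + x2 * x3), sq_nonneg (x2^2), sq_nonneg (x3^2), sq_nonneg (x1^2)]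
    · nlinarith [sq_nonneg (x1 - x2 * x3), sq_nonneg (x2^2), sq_nonneg (x3^2), sq_nonneg (x1^2)]
  simp only [map_add, h.E_const] at this
  simp only [pow_zero, one_pow, mul_one] at h1 h2 h3
  unfold jt at this ⊢
  linarith

lemma JFam.bound2 (H : JFam θ α M E a Mh) (j k : ℕ) :
    ∃ C : ℝ, ∀ᶠ N : ℕ in atTop, |E N (jt E N j * jt E N k)| ≤ C := by
  obtain ⟨C2, _, h2⟩ := H.good_P j
  obtain ⟨C3, _, h3⟩ := H.good_P k
  refine ⟨1 + C2 + C3, ?_⟩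
  filter_upwards [h2, h3, eventually_ge_atTop 1] with N h2 h3 hN
  have h := H.loop N hN
  have := h.abs_le (jt E N j * jt E N k)
    (ContinuousMap.const _ 1 + jt E N j ^ 4 + jt E N k ^ 4) fun x _ => by
    simp only [ContinuousMap.pow_apply, ContinuousMap.const_apply,
        ContinuousMap.add_apply, ContinuousMap.mul_apply]
    set x2 := jt E N j x
    set x3 := jt E N k x
    have b2 : x2 ^ 2 ≤ 1 + x2 ^ 4 := by nlinarith [sq_nonneg (x2 ^ 2 - 1)]
    have b3 : x3 ^ 2 ≤ 1 + x3 ^ 4 := by nlinarith [sq_nonneg (x3 ^ 2 - 1)]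
    rw [_root_.abs_le]
    constructor
    · nlinarith [sq_nonneg (x2 + x3), sq_nonneg (x2^2), sq_nonneg (x3^2)]
    · nlinarith [sq_nonneg (x2 - x3), sq_nonneg (x2^2), sq_nonneg (x3^2)]
  simp only [map_add, h.E_const] at this
  simp only [pow_zero, one_pow, mul_one] at h2 h3
  unfold jt at this ⊢
  linarith

lemma jac_bdd_div (f : ℕ → ℝ) (h : ∃ C : ℝ, ∀ᶠ N : ℕ in atTop, |f N| ≤ C) :
    Tendsto (fun N : ℕ => f N / N) atTop (𝓝 0) := by
  obtain ⟨C, h⟩ := h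
  refine squeeze_zero_norm' ?_ (tendsto_const_div_atTop_nhds_zero_nat C)
  filter_upwards [h] with N hN
  rw [Real.norm_eq_abs, abs_div, Nat.abs_cast]
  gcongr

lemma JFam.E_t (H : JFam θ α M E a Mh) {N : ℕ} (hN : 1 ≤ N) (k : ℕ) : E N (jt E N k) = 0 := by
  unfold jt
  rw [map_sub, (H.loop N hN).E_const]; ring

lemma JFam.E_mul (H : JFam θ α M E a Mh) {N : ℕ} (hN : 1 ≤ N) (i j : ℕ) :
    E N (jP N i * jP N j) = E N (jP N i) * E N (jP N j) + E N (jt E N i * jt E N j) := by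
  have h := H.loop N hN
  have e : jP N i * jP N j = ContinuousMap.const _ (E N (jP N i)) * jt E N j
      + ContinuousMap.const _ (E N (jP N j)) * jt E N i
      + ContinuousMap.const _ (E N (jP N i) * E N (jP N j)) + jt E N i * jt E N j := by
    ext x
    simp only [jt, ContinuousMap.const_apply, ContinuousMap.sub_apply,
        ContinuousMap.add_apply, ContinuousMap.mul_apply]
    ring
  rw [e]
  simp only [map_add, h.E_const_mul, h.E_const, H.E_t hN]
  ring

lemma JFam.E_mul_t (H : JFam θ α M E a Mh) {N : ℕ} (hN : 1 ≤ N) (l i : ℕ) :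
    E N (jt E N l * jP N i) = E N (jt E N i * jt E N l) := by
  have h := H.loop N hN
  have e : jt E N l * jP N i = ContinuousMap.const _ (E N (jP N i)) * jt E N l
      + jt E N i * jt E N l := by
    ext x
    simp only [jt, ContinuousMap.const_apply, ContinuousMap.sub_apply,
        ContinuousMap.add_apply, ContinuousMap.mul_apply]
    ring
  rw [e]
  simp only [map_add, h.E_const_mul, H.E_t hN]
  ring

lemma JFam.E_mul3 (H : JFam θ α M E a Mh) {N : ℕ} (hN : 1 ≤ N) (l i j : ℕ) :
    E N (jt E N l * (jP N i * jP N j)) = E N (jP N i) * E N (jt E N j * jt E N l)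
      + E N (jP N j) * E N (jt E N i * jt E N l) + E N (jt E N l * (jt E N i * jt E N j)) := by
  have h := H.loop N hN
  have e : jt E N l * (jP N i * jP N j) = ContinuousMap.const _ (E N (jP N i)) * (jt E N j * jt E N l)
      + ContinuousMap.const _ (E N (jP N j)) * (jt E N i * jt E N l)
      + ContinuousMap.const _ (E N (jP N i) * E N (jP N j)) * jt E N l
      + jt E N l * (jt E N i * jt E N j) := by
    ext x
    simp only [jt, ContinuousMap.const_apply, ContinuousMap.sub_apply,
        ContinuousMap.add_apply, ContinuousMap.mul_apply]
    ring
  rw [e]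
  simp only [map_add, h.E_const_mul, H.E_t hN]
  ring

lemma jT_E (θ α : ℝ) (N n : ℕ) (E : C(Fin N → ℝ, ℝ) →ₗ[ℝ] ℝ) (g : C(Fin N → ℝ, ℝ)) :
    E (g * jT θ α N n) = θ * (∑ ab ∈ Finset.HasAntidiagonal.antidiagonal n, E (g * (jP N ab.1 * jP N ab.2))
      - ∑ ab ∈ jmid n, E (g * (jP N ab.1 * jP N ab.2))) + ju θ α n * E (g * jP N n) := by
  unfold jT
  simp only [mul_add, mul_smul_comm, mul_sub, Finset.mul_sum, map_add, map_smul, map_sub, map_sum,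
    smul_eq_mul]

lemma JFam.lead_ne (H : JFam θ α M E a Mh) : θ * (1 + a + Mh) ≠ 0 := by
  have := H.hθ
  have h1 := H.a_nonneg
  have h2 := H.Mh_ge
  positivity

lemma JFam.mean_step (H : JFam θ α M E a Mh) (n : ℕ) (μ : ℕ → ℝ)
    (hμ : ∀ k ≤ n, Tendsto (fun N : ℕ => E N (jP N k) / N) atTop (𝓝 (μ k))) :
    Tendsto (fun N : ℕ => E N (jP N (n + 1)) / N) atTop
      (𝓝 ((θ * (∑ ab ∈ Finset.HasAntidiagonal.antidiagonal n, μ ab.1 * μ ab.2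
        - ∑ ab ∈ jmid n, μ ab.1 * μ ab.2) + θ * a * μ n) / (θ * (1 + a + Mh)))) := by
  have hz : ∀ i j, i ≤ n → j ≤ n → Tendsto (fun N : ℕ => E N (jP N i) / N * (E N (jP N j) / N)
      + E N (jt E N i * jt E N j) / N * (1 / N)) atTop (𝓝 (μ i * μ j)) := by
    intro i j hi hj
    have := ((hμ i hi).mul (hμ j hj)).add ((jac_bdd_div _ (H.bound2 i j)).mul
      (tendsto_const_div_atTop_nhds_zero_nat (1:ℝ)))
    simpa using this
  have h1 := tendsto_finsetSum (Finset.HasAntidiagonal.antidiagonal n)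
    fun ab hab => hz ab.1 ab.2 (mem_jad hab).1 (mem_jad hab).2
  have h2 := tendsto_finsetSum (jmid n)
    fun ab hab => hz ab.1 ab.2 (mem_jmid hab).1 (mem_jmid hab).2
  have h3 := (((h1.sub h2).const_mul θ).add ((H.lim_u n).mul (hμ n le_rfl))).div (H.lim_B n) H.lead_ne
  refine h3.congr' ?_
  filter_upwards [eventually_ge_atTop 1, (H.lim_B n).eventually_ne H.lead_ne] with N hN hB
  have hN0 : (N : ℝ) ≠ 0 := by positivity
  have h := (H.loop N hN).loopT n 0 0 0
  simp only [pow_zero, Nat.cast_zero, zero_mul, add_zero, jT_E] at h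
  simp only [one_mul, H.E_mul hN] at h
  simp only [Pi.div_apply]
  rw [div_eq_iff hB]
  have hs : ∀ s : Finset (ℕ × ℕ), ∑ ab ∈ s, (E N (jP N ab.1) / N * (E N (jP N ab.2) / N)
      + E N (jt E N ab.1 * jt E N ab.2) / N * (1 / N))
      = (∑ ab ∈ s, (E N (jP N ab.1) * E N (jP N ab.2) + E N (jt E N ab.1 * jt E N ab.2))) / N ^ 2 := by
    intro s
    rw [Finset.sum_div]
    refine Finset.sum_congr rfl fun ab _ => ?_
    field_simp
  rw [hs, hs]
  field_simp
  linear_combination h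

lemma JFam.mean (H : JFam θ α M E a Mh) : ∃ μ : ℕ → ℝ, μ 0 = 1 ∧
    (∀ k, Tendsto (fun N : ℕ => E N (jP N k) / N) atTop (𝓝 (μ k))) ∧
    (∀ n, ∑ ab ∈ Finset.HasAntidiagonal.antidiagonal n, μ ab.1 * μ ab.2
      - ∑ ab ∈ Finset.HasAntidiagonal.antidiagonal (n+1), μ ab.1 * μ ab.2
      + a*(μ n - μ (n+1)) - (Mh-1)*μ (n+1) = 0) := by
  have h0 : Tendsto (fun N : ℕ => E N (jP N 0) / N) atTop (𝓝 1) := by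
    refine tendsto_const_nhds.congr' ?_
    filter_upwards [eventually_ge_atTop 1] with N hN
    have hN0 : (N : ℝ) ≠ 0 := by positivity
    rw [jP_zero, (H.loop N hN).E_const, div_self hN0]
  have hex : ∀ k, ∃ m : ℝ, Tendsto (fun N : ℕ => E N (jP N k) / N) atTop (𝓝 m) := by
    intro k
    induction k using Nat.strong_induction_on with
    | _ k ih =>
    cases k with
    | zero => exact ⟨1, h0⟩
    | succ n =>
      choose! μ hμ using ih
      exact ⟨_, H.mean_step n μ fun k hk => hμ k (by omega)⟩
  choose μ hμ using hex
  have hμ0 : μ 0 = 1 := tendsto_nhds_unique (hμ 0) h0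
  refine ⟨μ, hμ0, hμ, fun n => ?_⟩
  have h1 := tendsto_nhds_unique (hμ (n + 1)) (H.mean_step n μ fun k _ => hμ k)
  rw [eq_div_iff H.lead_ne] at h1
  rw [jmid_sum n (fun i j => μ i * μ j), hμ0]
  have h2 : θ * (μ (n + 1) * (1 + a + Mh)) = θ * ((∑ ab ∈ Finset.HasAntidiagonal.antidiagonal n, μ ab.1 * μ ab.2
        - ∑ ab ∈ jmid n, μ ab.1 * μ ab.2) + a * μ n) := by linear_combination h1
  have h3 := mul_left_cancel₀ H.hθ.ne' h2
  linear_combination -h3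

lemma JFam.cov_step (H : JFam θ α M E a Mh) (n l : ℕ) (μ γ : ℕ → ℝ)
    (hμ : ∀ k, Tendsto (fun N : ℕ => E N (jP N k) / N) atTop (𝓝 (μ k)))
    (hγ : ∀ k ≤ n, Tendsto (fun N : ℕ => E N (jt E N k * jt E N (l + 1))) atTop (𝓝 (γ k))) :
    Tendsto (fun N : ℕ => E N (jt E N (n + 1) * jt E N (l + 1))) atTop
      (𝓝 ((θ * (∑ ab ∈ Finset.HasAntidiagonal.antidiagonal n, (μ ab.1 * γ ab.2 + μ ab.2 * γ ab.1)
        - ∑ ab ∈ jmid n, (μ ab.1 * γ ab.2 + μ ab.2 * γ ab.1)) + θ * a * γ n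
        + ((l + 1 : ℕ) : ℝ) * (μ (n + (l + 1)) - μ (n + (l + 1) + 1))) / (θ * (1 + a + Mh)))) := by
  have hz : ∀ i j, i ≤ n → j ≤ n → Tendsto (fun N : ℕ =>
      E N (jP N i) / N * E N (jt E N j * jt E N (l + 1))
      + E N (jP N j) / N * E N (jt E N i * jt E N (l + 1))
      + E N (jt E N (l + 1) * (jt E N i * jt E N j)) / N) atTop (𝓝 (μ i * γ j + μ j * γ i)) := by
    intro i j hi hj
    have := (((hμ i).mul (hγ j hj)).add ((hμ j).mul (hγ i hi))).add (jac_bdd_div _ (H.bound3 (l + 1) i j))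
    simpa using this
  have h1 := tendsto_finsetSum (Finset.HasAntidiagonal.antidiagonal n)
    fun ab hab => hz ab.1 ab.2 (mem_jad hab).1 (mem_jad hab).2
  have h2 := tendsto_finsetSum (jmid n)
    fun ab hab => hz ab.1 ab.2 (mem_jmid hab).1 (mem_jmid hab).2
  have h3 := ((((h1.sub h2).const_mul θ).add ((H.lim_u n).mul (hγ n le_rfl))).add
    (((hμ (n + (l + 1))).sub (hμ (n + (l + 1) + 1))).const_mul ((l + 1 : ℕ) : ℝ))).div (H.lim_B n) H.lead_ne
  refine h3.congr' ?_
  filter_upwards [eventually_ge_atTop 1, (H.lim_B n).eventually_ne H.lead_ne] with N hN hB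
  have hN0 : (N : ℝ) ≠ 0 := by positivity
  have h := (H.loop N hN).loopT n l 1 (E N (jP N (l + 1)))
  rw [show jP N (l + 1) - ContinuousMap.const _ (E N (jP N (l + 1))) = jt E N (l + 1) from rfl] at h
  simp only [pow_one, jT_E, Nat.sub_self, pow_zero, one_mul, map_sub, H.E_mul3 hN, H.E_mul_t hN] at h
  simp only [Pi.div_apply]
  rw [div_eq_iff hB]
  have hs : ∀ s : Finset (ℕ × ℕ), ∑ ab ∈ s, (E N (jP N ab.1) / N * E N (jt E N ab.2 * jt E N (l + 1))
      + E N (jP N ab.2) / N * E N (jt E N ab.1 * jt E N (l + 1))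
      + E N (jt E N (l + 1) * (jt E N ab.1 * jt E N ab.2)) / N)
      = (∑ ab ∈ s, (E N (jP N ab.1) * E N (jt E N ab.2 * jt E N (l + 1))
      + E N (jP N ab.2) * E N (jt E N ab.1 * jt E N (l + 1))
      + E N (jt E N (l + 1) * (jt E N ab.1 * jt E N ab.2)))) / N := by
    intro s
    rw [Finset.sum_div]
    refine Finset.sum_congr rfl fun ab _ => ?_
    field_simp
  rw [hs, hs]
  field_simp
  push_cast at h ⊢
  linear_combination h

theorem JFam.cov_limit (H : JFam θ α M E a Mh) (K p x0 q : ℝ) (hK : K = 1 + a + Mh)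
    (hq : q = (1 + a) / K ^ 2) (hp : p = (a + Mh) * Mh / K ^ 2) (hx : x0 = 1 - p - q) (k l : ℕ) :
    Tendsto (fun N : ℕ => E N (jt E N k * jt E N (l + 1))) atTop (𝓝 (θ⁻¹ * jG p x0 q k (l + 1))) := by
  obtain ⟨μ, hμ0, hμ, hrec⟩ := H.mean
  induction k using Nat.strong_induction_on with
  | _ k ih =>
  cases k with
  | zero =>
    have : jG p x0 q 0 (l + 1) = 0 := by simp [jG]
    rw [this, mul_zero]
    refine tendsto_const_nhds.congr' ?_
    filter_upwards [eventually_ge_atTop 1] with N hN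
    have : jt E N 0 = 0 := by
      unfold jt
      rw [jP_zero, (H.loop N hN).E_const, sub_self]
    rw [this, zero_mul, map_zero]
  | succ n =>
    have h1 := H.cov_step n l μ (fun k => θ⁻¹ * jG p x0 q k (l + 1)) hμ fun k hk => ih k (by omega)
    have hG := jG_recursion a Mh K p x0 q H.a_nonneg H.Mh_ge hK hq hp hx μ hμ0 hrec n l
    have h0 : jG p x0 q 0 (l + 1) = 0 := by simp [jG]
    have hsw : ∀ m, ∑ ab ∈ Finset.HasAntidiagonal.antidiagonal m, μ ab.2 * jG p x0 q ab.1 (l + 1)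
        = ∑ ab ∈ Finset.HasAntidiagonal.antidiagonal m, μ ab.1 * jG p x0 q ab.2 (l + 1) := by
      intro m
      rw [← Finset.Nat.sum_antidiagonal_swap]
      simp
    have hm1 := jmid_sum n (fun i j => μ i * jG p x0 q j (l + 1))
    have hm2 := jmid_sum n (fun i j => μ j * jG p x0 q i (l + 1))
    simp only [hsw, h0, hμ0] at hm1 hm2
    have hθ := H.hθ.ne'
    have e : (θ * (∑ ab ∈ Finset.HasAntidiagonal.antidiagonal n, (μ ab.1 * (θ⁻¹ * jG p x0 q ab.2 (l + 1)) + μ ab.2 * (θ⁻¹ * jG p x0 q ab.1 (l + 1)))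
        - ∑ ab ∈ jmid n, (μ ab.1 * (θ⁻¹ * jG p x0 q ab.2 (l + 1)) + μ ab.2 * (θ⁻¹ * jG p x0 q ab.1 (l + 1)))) + θ * a * (θ⁻¹ * jG p x0 q n (l + 1))
        + ((l + 1 : ℕ) : ℝ) * (μ (n + (l + 1)) - μ (n + (l + 1) + 1))) / (θ * (1 + a + Mh))
        = θ⁻¹ * jG p x0 q (n + 1) (l + 1) := by
      have hs : ∀ s : Finset (ℕ × ℕ), ∑ ab ∈ s, (μ ab.1 * (θ⁻¹ * jG p x0 q ab.2 (l + 1)) + μ ab.2 * (θ⁻¹ * jG p x0 q ab.1 (l + 1)))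
          = θ⁻¹ * (∑ ab ∈ s, μ ab.1 * jG p x0 q ab.2 (l + 1) + ∑ ab ∈ s, μ ab.2 * jG p x0 q ab.1 (l + 1)) := by
        intro s
        rw [← Finset.sum_add_distrib, Finset.mul_sum]
        exact Finset.sum_congr rfl fun ab _ => by ring
      rw [hs, hs, hsw, div_eq_iff H.lead_ne]
      field_simp
      linear_combination hG + hm1 + hm2
    rw [e] at h1
    exact h1

end JacLimits

/-- **Limiting covariance for a single β-Jacobi ensemble** (equal-times case of the paper's
Theorem 5.2): `Cov(𝔓_{k₁}(y), 𝔓_{k₂}(y))` converges to an explicit double contour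
integral, proportional to `θ⁻¹`. -/
theorem jacobi_covariance_limit
    (θ : ℝ) (hθ : 0 < θ) (α : ℕ → ℝ) (M : ℕ → ℕ)
    (hα : ∀ N : ℕ, 1 ≤ N → 0 < α N) (hM : ∀ N : ℕ, 1 ≤ N → N ≤ M N)
    (αhat Mhat : ℝ) (hαhat : 0 ≤ αhat)
    (hαlim : Filter.Tendsto (fun N : ℕ => α N / (N : ℝ)) Filter.atTop (nhds αhat))
    (hMlim : Filter.Tendsto (fun N : ℕ => (M N : ℝ) / (N : ℝ)) Filter.atTop (nhds Mhat))
    (k₁ k₂ : ℕ) (hk₁ : 0 < k₁) (hk₂ : 0 < k₂)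
    (r₁ r₂ : ℝ) (hr₁ : 0 < r₁) (hr₁₂ : r₁ < r₂) (hr₂ : r₂ < 1 + αhat + Mhat) :
    Filter.Tendsto
      (fun N : ℕ =>
        (((∫ y, (∑ j : Fin N, (y j) ^ k₁) * (∑ j : Fin N, (y j) ^ k₂)
              ∂ jacobiEnsemble θ (α N) (M N) N)
          - (∫ y, ∑ j : Fin N, (y j) ^ k₁ ∂ jacobiEnsemble θ (α N) (M N) N)
            * (∫ y, ∑ j : Fin N, (y j) ^ k₂ ∂ jacobiEnsemble θ (α N) (M N) N) : ℝ) : ℂ))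
      Filter.atTop
      (nhds (((θ : ℂ))⁻¹ * ((2 * (Real.pi : ℂ) * Complex.I)⁻¹) ^ 2 *
        (∮ v₂ in C(-1, r₂), (∮ v₁ in C(-1, r₁),
          ((v₂ - v₁) ^ 2)⁻¹ *
            (v₁ / (v₁ + 1) * ((v₁ - (αhat : ℂ)) / (v₁ - αhat - Mhat))) ^ k₁ *
            (v₂ / (v₂ + 1) * ((v₂ - (αhat : ℂ)) / (v₂ - αhat - Mhat))) ^ k₂)))) := by
  have hex : ∀ N : ℕ, ∃ E : C(Fin N → ℝ, ℝ) →ₗ[ℝ] ℝ, 1 ≤ N →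
      ((∀ f, E f = ∫ y, f y ∂ jacobiEnsemble θ (α N) (M N) N) ∧ JLoop θ (α N) (M N) N E) := by
    intro N
    by_cases hN : 1 ≤ N
    · obtain ⟨E, h⟩ := jac_exists_functional θ (α N) (M N) N hθ (hα N hN) (hM N hN)
      exact ⟨E, fun _ => h⟩
    · exact ⟨0, fun h => absurd h hN⟩
  choose E hE using hex
  have H : JFam θ α (fun N => (M N : ℝ)) E αhat Mhat :=
    { hθ := hθ
      loop := fun N hN => (hE N hN).2
      αpos := hα
      MN := fun N hN => by exact_mod_cast hM N hN
      limα := hαlim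
      limM := hMlim }
  obtain ⟨l, rfl⟩ : ∃ l, k₂ = l + 1 := ⟨k₂ - 1, by omega⟩
  have hK0 : 0 < 1 + αhat + Mhat := by linarith
  rw [jac_contour αhat Mhat (1 + αhat + Mhat) _ _ _ hK0 rfl rfl rfl rfl k₁ (l + 1) r₁ r₂ hr₁ hr₁₂ hr₂]
  have hc := H.cov_limit (1 + αhat + Mhat) _ _ _ rfl rfl rfl rfl k₁ l
  have hc2 := (Complex.continuous_ofReal.tendsto _).comp hc
  have h2 : (2 * (Real.pi : ℂ) * Complex.I) ≠ 0 := Complex.two_pi_I_ne_zero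
  rw [mul_assoc, ← mul_assoc (((2 * (Real.pi : ℂ) * Complex.I)⁻¹) ^ 2), ← mul_pow,
    inv_mul_cancel₀ h2, one_pow, one_mul]
  rw [Complex.ofReal_mul, Complex.ofReal_inv] at hc2
  refine hc2.congr' ?_
  filter_upwards [Filter.eventually_ge_atTop 1] with N hN
  have e1 := H.E_mul hN k₁ (l + 1)
  rw [(hE N hN).1 (jP N k₁ * jP N (l + 1)), (hE N hN).1 (jP N k₁), (hE N hN).1 (jP N (l + 1))] at e1
  simp only [ContinuousMap.mul_apply, jP_apply] at e1
  rw [Function.comp_apply, e1]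
  push_cast
  ring
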